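/- arXiv:1609.08132 — 2 statements merged into one kernel-verified Lean document; each statement's English description precedes it below -/
import Mathlib

section
/- For every integer n ≥ 7 and for every straight-line plane drawing p of the extended wheel graph W_n⁺, there is no 1-string representation of W_n⁺ that is order-preserving with respect to p and in which every arc has at least one of its endpoints in the closure of the contour of the family of arcs. -/
/-- An arc: an injective continuous map from `[0,1]` to `ℝ²`
(formalized as a map `ℝ → ℝ × ℝ` that is continuous and injective on `[0,1]`). -/
structure Arc where
  toFun : ℝ → ℝ × ℝ
  contOn : ContinuousOn toFun (Set.Icc 0 1)
  injOn : Set.InjOn toFun (Set.Icc 0 1)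

/-- The image of an arc. -/
def Arc.img (γ : Arc) : Set (ℝ × ℝ) := γ.toFun '' Set.Icc 0 1

/-- The endpoints of an arc. -/
def Arc.ends (γ : Arc) : Set (ℝ × ℝ) := {γ.toFun 0, γ.toFun 1}

/-- Two arcs cross properly at `q`: `q` is an interior point of both arcs, and there is
an open neighbourhood of `q` mapped homeomorphically onto the open unit disk with `q ↦ 0`,
taking the first arc to the horizontal diameter and the second to the vertical diameter. -/
def CrossesProperlyAt (γ₁ γ₂ : Arc) (q : ℝ × ℝ) : Prop :=
  (∃ s ∈ Set.Ioo (0:ℝ) 1, γ₁.toFun s = q) ∧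
  (∃ t ∈ Set.Ioo (0:ℝ) 1, γ₂.toFun t = q) ∧
  ∃ h : PartialHomeomorph (ℝ × ℝ) (ℝ × ℝ),
    q ∈ h.source ∧ h.target = Metric.ball (0 : ℝ × ℝ) 1 ∧ h q = 0 ∧
    h '' (h.source ∩ γ₁.img) = {z : ℝ × ℝ | z ∈ Metric.ball (0 : ℝ × ℝ) 1 ∧ z.2 = 0} ∧
    h '' (h.source ∩ γ₂.img) = {z : ℝ × ℝ | z ∈ Metric.ball (0 : ℝ × ℝ) 1 ∧ z.1 = 0}

/-- A 1-string representation of a simple graph `G`. -/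
structure OneStringRep {V : Type} (G : SimpleGraph V) where
  γ : V → Arc
  adj_inter : ∀ u v : V, G.Adj u v → ∃ q : ℝ × ℝ, (γ u).img ∩ (γ v).img = {q}
  nonadj_disjoint : ∀ u v : V, u ≠ v → ¬G.Adj u v → (γ u).img ∩ (γ v).img = ∅
  proper : ∀ u v : V, u ≠ v → ∀ q ∈ (γ u).img ∩ (γ v).img, CrossesProperlyAt (γ u) (γ v) q
  no_triple : ∀ u v w : V, u ≠ v → u ≠ w → v ≠ w → (γ u).img ∩ (γ v).img ∩ (γ w).img = ∅

/-- A straight-line plane drawing of a simple graph. -/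
def IsPlaneDrawing {V : Type} (G : SimpleGraph V) (p : V → ℝ × ℝ) : Prop :=
  Function.Injective p ∧
  (∀ u v x y : V, G.Adj u v → G.Adj x y → u ≠ x → u ≠ y → v ≠ x → v ≠ y →
    segment ℝ (p u) (p v) ∩ segment ℝ (p x) (p y) = ∅) ∧
  (∀ u v w : V, G.Adj u v → G.Adj u w → v ≠ w →
    segment ℝ (p u) (p v) ∩ segment ℝ (p u) (p w) = {p u}) ∧
  (∀ u v w : V, G.Adj u v → w ≠ u → w ≠ v → p w ∉ segment ℝ (p u) (p v))

/-- The angle of the vector from `a` to `b`. -/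
noncomputable def angleAt (a b : ℝ × ℝ) : ℝ := Complex.arg ⟨b.1 - a.1, b.2 - a.2⟩

/-- A 1-string representation is order-preserving w.r.t. a straight-line plane drawing `p`:
for each vertex `v`, listing the neighbours `w₁, …, w_k` sorted by the angle of `p wᵢ - p v`,
there are a traversal direction of `γ v` and a cyclic rotation of the list such that the
intersection points of `γ v` with the `γ wᵢ` occur along `γ v`, in that traversal direction,
exactly in the rotated order. -/
def OrderPreserving {V : Type} (G : SimpleGraph V) (p : V → ℝ × ℝ)
    (R : OneStringRep G) : Prop :=
  ∀ v : V, ∃ l : List V,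
    l.Nodup ∧ (∀ w : V, w ∈ l ↔ G.Adj v w) ∧
    l.Pairwise (fun w w' => angleAt (p v) (p w) < angleAt (p v) (p w')) ∧
    ∃ (r : ℕ) (dir : Bool) (t : V → ℝ),
      (∀ w ∈ l, t w ∈ Set.Icc (0:ℝ) 1 ∧ (R.γ v).toFun (t w) ∈ (R.γ w).img) ∧
      (l.rotate r).Pairwise (fun w w' => if dir then t w < t w' else t w' < t w)

/-- The union of the images of a family of arcs. -/
def arcUnion {V : Type} (γ : V → Arc) : Set (ℝ × ℝ) := ⋃ v, (γ v).img

/-- The contour of a family of arcs: the unbounded connected component of the complement of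
the union of the images (formalized as the union of all unbounded connected components). -/
def contour {V : Type} (γ : V → Arc) : Set (ℝ × ℝ) :=
  {x | x ∈ (arcUnion γ)ᶜ ∧ ¬ Bornology.IsBounded (connectedComponentIn (arcUnion γ)ᶜ x)}

/-- A `k`-tree: there is an ordering of the vertices such that the first `k` form a clique and
every later vertex has exactly `k` earlier neighbours, which form a clique. -/
def IsKTree {V : Type} (k : ℕ) (G : SimpleGraph V) : Prop :=
  ∃ (n : ℕ) (e : V ≃ Fin n), k ≤ n ∧
    G.IsClique {v : V | (e v).val < k} ∧
    ∀ i : Fin n, k ≤ i.val →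
      ∃ S : Finset V, S.card = k ∧
        (∀ w : V, w ∈ S ↔ G.Adj (e.symm i) w ∧ (e w).val < i.val) ∧
        G.IsClique ↑S

/-- An L-shape: an arc whose image is the union of a vertical segment from `(x, y+h)` to
`(x, y)` and a horizontal segment from `(x, y)` to `(x+w, y)` with `w, h > 0`. -/
def IsLShape (γ : Arc) : Prop :=
  ∃ x y w h : ℝ, 0 < w ∧ 0 < h ∧
    γ.img = segment ℝ (x, y + h) (x, y) ∪ segment ℝ (x, y) (x + w, y)

/-- A 1-bend orthogonal arc: its image is a single horizontal or vertical segment, or the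
union of a horizontal segment and a vertical segment sharing exactly one endpoint. -/
def IsOneBendOrth (γ : Arc) : Prop :=
  (∃ a b : ℝ × ℝ, a ≠ b ∧ (a.1 = b.1 ∨ a.2 = b.2) ∧ γ.img = segment ℝ a b) ∨
  (∃ a b c : ℝ × ℝ, a ≠ b ∧ b ≠ c ∧
    ((a.1 = b.1 ∧ b.2 = c.2) ∨ (a.2 = b.2 ∧ b.1 = c.1)) ∧
    γ.img = segment ℝ a b ∪ segment ℝ b c ∧ segment ℝ a b ∩ segment ℝ b c = {b})

/-- A graph is 2-connected if it has at least 3 vertices and deleting any single vertex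
leaves a connected graph. -/
def TwoConnected {V : Type} (G : SimpleGraph V) : Prop :=
  3 ≤ Nat.card V ∧ ∀ v : V, ((⊤ : G.Subgraph).deleteVerts {v}).coe.Connected

/-- The wheel graph `W n`: a cycle `v₀, …, v_{n-1}` (indexed by `ZMod n`, as `some i`, with
`v i` adjacent to `v (i+1)`, indices mod `n`) together with a hub (`none`) adjacent to every
cycle vertex. -/
def wheelGraph (n : ℕ) : SimpleGraph (Option (ZMod n)) :=
  SimpleGraph.fromRel (fun a b =>
    match a, b with
    | none, some _ => True
    | some i, some j => j = i + 1
    | _, _ => False)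

/-- The extended wheel graph `W n⁺`: the wheel graph `W n` (on `Sum.inl` vertices) together
with additional vertices `w₀, …, w_{n-1}` (as `Sum.inr i`), where `w i` is adjacent exactly
to `v i` and `v (i+1)` (indices mod `n`). -/
def extWheelGraph (n : ℕ) : SimpleGraph (Option (ZMod n) ⊕ ZMod n) :=
  SimpleGraph.fromRel (fun a b =>
    match a, b with
    | Sum.inl none, Sum.inl (some _) => True
    | Sum.inl (some i), Sum.inl (some j) => j = i + 1
    | Sum.inr i, Sum.inl (some j) => j = i ∨ j = i + 1
    | _, _ => False)

section helpers
open Set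

theorem aux_const {X : Type*} [TopologicalSpace X] {S : Set X} (hS : IsPreconnected S) {F : X → ℂ}
    (hF : ContinuousOn F S) {k : ℂ} (h : ∀ x ∈ S, Complex.exp (F x) = k) {x y : X} (hx : x ∈ S)
    (hy : y ∈ S) : F x = F y := by
  have sep := Complex.isCoveringMap_exp.isSeparatedMap
  have inj := Complex.isCoveringMap_exp.isLocalHomeomorph.isLocallyInjective
  refine sep.constOn_of_comp inj hS hF ?_ hx hy
  intro a ha b hb
  apply Subtype.ext
  simp only
  rw [h a ha, h b hb]

theorem aux_lift {A : Type*} [TopologicalSpace A] [SimplyConnectedSpace A]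
    [LocallyPathConnectedSpace A] (f : A → ℂ) (hf : Continuous f) (h0 : ∀ x, f x ≠ 0) :
    ∃ g : A → ℂ, Continuous g ∧ ∀ x, Complex.exp (g x) = f x := by
  obtain ⟨a₀⟩ : Nonempty A := inferInstance
  obtain ⟨F, ⟨-, hF⟩, -⟩ := Complex.isCoveringMapOn_exp.existsUnique_continuousMap_lifts ⟨f, hf⟩
    (a₀ := a₀) (e₀ := Complex.log (f a₀)) (by simp [Complex.exp_log (h0 a₀)])
    (by intro a; simpa using h0 a)
  exact ⟨F, F.continuous, fun x => congrFun hF x⟩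

def HasLift (f : ℝ → ℂ) (a b : ℝ) (g : ℝ → ℂ) : Prop :=
  ContinuousOn g (uIcc a b) ∧ ∀ t ∈ uIcc a b, Complex.exp (g t) = f t

open Classical in
noncomputable def dlog (f : ℝ → ℂ) (a b : ℝ) : ℂ :=
  if h : ∃ g, HasLift f a b g then h.choose b - h.choose a else 0

theorem dlog_eq {f : ℝ → ℂ} {a b : ℝ} {g : ℝ → ℂ} (hg : HasLift f a b g) :
    dlog f a b = g b - g a := by
  have h : ∃ g, HasLift f a b g := ⟨g, hg⟩
  rw [dlog, dif_pos h]
  obtain ⟨h1, h2⟩ := h.choose_spec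
  have := aux_const (S := uIcc a b) (isPreconnected_uIcc)
    (F := fun t => h.choose t - g t) (h1.sub hg.1) (k := 1) (fun t ht => by
      rw [Complex.exp_sub, h2 t ht, hg.2 t ht, div_self]
      rw [← hg.2 t ht]; exact Complex.exp_ne_zero _) (right_mem_uIcc) (left_mem_uIcc)
  linear_combination this

theorem exists_lift {f : ℝ → ℂ} {a b : ℝ} (hf : ContinuousOn f (uIcc a b))
    (h0 : ∀ t ∈ uIcc a b, f t ≠ 0) : ∃ g, HasLift f a b g := by
  have hle : min a b ≤ max a b := min_le_max
  obtain ⟨g, hg, hg2⟩ := aux_lift (fun t : ℝ => f (projIcc _ _ hle t))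
    (hf.comp_continuous (by fun_prop) (fun x => (projIcc _ _ hle x).2))
    (fun x => h0 _ (projIcc _ _ hle x).2)
  refine ⟨g, hg.continuousOn, fun t ht => ?_⟩
  rw [hg2, projIcc_of_mem hle ht]

theorem dlog_add {f : ℝ → ℂ} {a b m : ℝ} (hf : ContinuousOn f (uIcc a b))
    (h0 : ∀ t ∈ uIcc a b, f t ≠ 0) (hm : m ∈ uIcc a b) :
    dlog f a b = dlog f a m + dlog f m b := by
  obtain ⟨g, hg, hg2⟩ := exists_lift hf h0
  have s1 : uIcc a m ⊆ uIcc a b := uIcc_subset_uIcc_left hm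
  have s2 : uIcc m b ⊆ uIcc a b := uIcc_subset_uIcc_right hm
  rw [dlog_eq ⟨hg, hg2⟩, dlog_eq (a := a) (b := m) ⟨hg.mono s1, fun t ht => hg2 t (s1 ht)⟩,
    dlog_eq (a := m) (b := b) ⟨hg.mono s2, fun t ht => hg2 t (s2 ht)⟩]
  ring

theorem dlog_swap {f : ℝ → ℂ} {a b : ℝ} (hf : ContinuousOn f (uIcc a b))
    (h0 : ∀ t ∈ uIcc a b, f t ≠ 0) : dlog f b a = - dlog f a b := by
  obtain ⟨g, hg, hg2⟩ := exists_lift hf h0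
  rw [dlog_eq ⟨hg, hg2⟩, dlog_eq (a := b) (b := a) (g := g) (by rw [HasLift, uIcc_comm]; exact ⟨hg, hg2⟩)]
  ring

theorem dlog_comp {f : ℝ → ℂ} {σ : ℝ → ℝ} {a b : ℝ} (hσ : ContinuousOn σ (uIcc a b))
    (hm : MapsTo σ (uIcc a b) (uIcc (σ a) (σ b)))
    (hf : ContinuousOn f (uIcc (σ a) (σ b))) (h0 : ∀ t ∈ uIcc (σ a) (σ b), f t ≠ 0) :
    dlog (fun t => f (σ t)) a b = dlog f (σ a) (σ b) := by
  obtain ⟨g, hg, hg2⟩ := exists_lift hf h0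
  rw [dlog_eq ⟨hg, hg2⟩, dlog_eq (g := fun t => g (σ t))]
  exact ⟨hg.comp hσ hm, fun t ht => hg2 _ (hm ht)⟩

theorem dlog_congr {f f' : ℝ → ℂ} {a b : ℝ} (h : ∀ t ∈ uIcc a b, f t = f' t) :
    dlog f a b = dlog f' a b := by
  have : HasLift f a b = HasLift f' a b := by
    funext g
    apply propext
    constructor
    · rintro ⟨h1, h2⟩; exact ⟨h1, fun t ht => by rw [h2 t ht, h t ht]⟩
    · rintro ⟨h1, h2⟩; exact ⟨h1, fun t ht => by rw [h2 t ht, h t ht]⟩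
  unfold dlog
  rw [this]

/-- boundary degree of a map on a rectangle -/
noncomputable def bdeg (D : ℝ → ℝ → ℂ) (a b c d : ℝ) : ℂ :=
  dlog (fun s => D s d) a b - dlog (fun s => D s c) a b
    - dlog (fun t => D b t) c d + dlog (fun t => D a t) c d

theorem bdeg_zero {D : ℝ → ℝ → ℂ} {a b c d : ℝ}
    (hD : ContinuousOn (fun x : ℝ × ℝ => D x.1 x.2) (uIcc a b ×ˢ uIcc c d))
    (h0 : ∀ s ∈ uIcc a b, ∀ t ∈ uIcc c d, D s t ≠ 0) : bdeg D a b c d = 0 := by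
  have hle : min a b ≤ max a b := min_le_max
  have hle' : min c d ≤ max c d := min_le_max
  obtain ⟨g, hg, hg2⟩ := aux_lift
    (fun x : ℝ × ℝ => D (projIcc _ _ hle x.1) (projIcc _ _ hle' x.2))
    (hD.comp_continuous (f := fun x : ℝ × ℝ =>
      (((projIcc _ _ hle x.1 : ℝ)), ((projIcc _ _ hle' x.2 : ℝ)))) (by fun_prop)
      (fun x => ⟨(projIcc _ _ hle x.1).2, (projIcc _ _ hle' x.2).2⟩))
    (fun x => h0 _ (projIcc _ _ hle x.1).2 _ (projIcc _ _ hle' x.2).2)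
  have key : ∀ s ∈ uIcc a b, ∀ t ∈ uIcc c d, Complex.exp (g (s, t)) = D s t := by
    intro s hs t ht
    rw [hg2, projIcc_of_mem hle hs, projIcc_of_mem hle' ht]
  have H1 : ∀ t ∈ uIcc c d, dlog (fun s => D s t) a b = g (b, t) - g (a, t) := fun t ht =>
    dlog_eq (g := fun s => g (s, t)) ⟨by fun_prop, fun s hs => key s hs t ht⟩
  have H2 : ∀ s ∈ uIcc a b, dlog (fun t => D s t) c d = g (s, d) - g (s, c) := fun s hs =>
    dlog_eq (g := fun t => g (s, t)) ⟨by fun_prop, fun t ht => key s hs t ht⟩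
  rw [bdeg, H1 d right_mem_uIcc, H1 c left_mem_uIcc, H2 a left_mem_uIcc, H2 b right_mem_uIcc]
  ring

theorem bdeg_split_s {D : ℝ → ℝ → ℂ} {a b c d m : ℝ}
    (h1 : ContinuousOn (fun s => D s c) (uIcc a b)) (h1' : ∀ s ∈ uIcc a b, D s c ≠ 0)
    (h2 : ContinuousOn (fun s => D s d) (uIcc a b)) (h2' : ∀ s ∈ uIcc a b, D s d ≠ 0)
    (hm : m ∈ uIcc a b) : bdeg D a b c d = bdeg D a m c d + bdeg D m b c d := by
  unfold bdeg
  rw [dlog_add h1 h1' hm, dlog_add h2 h2' hm]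
  ring

theorem bdeg_split_t {D : ℝ → ℝ → ℂ} {a b c d m : ℝ}
    (h1 : ContinuousOn (fun s => D a s) (uIcc c d)) (h1' : ∀ s ∈ uIcc c d, D a s ≠ 0)
    (h2 : ContinuousOn (fun s => D b s) (uIcc c d)) (h2' : ∀ s ∈ uIcc c d, D b s ≠ 0)
    (hm : m ∈ uIcc c d) : bdeg D a b c d = bdeg D a b c m + bdeg D a b m d := by
  unfold bdeg
  rw [dlog_add h1 h1' hm, dlog_add h2 h2' hm]
  ring


theorem log_rot {u : ℂ} (hu : 0 < u.re) :
    Complex.log (-Complex.I * u) + (Real.pi / 2 : ℝ) * Complex.I = Complex.log u := by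
  have hu0 : u ≠ 0 := by rintro rfl; simp at hu
  have e : Complex.exp (Complex.log u - (Real.pi / 2 : ℝ) * Complex.I) = -Complex.I * u := by
    rw [Complex.exp_sub, Complex.exp_log hu0]
    push_cast
    rw [Complex.exp_pi_div_two_mul_I, div_eq_mul_inv, Complex.inv_I]; ring
  have harg := Complex.abs_arg_lt_pi_div_two_iff.2 (Or.inl hu)
  rw [abs_lt] at harg
  rw [← e, Complex.log_exp]
  · ring
  · simp [Complex.log_im]; linarith
  · simp [Complex.log_im]; linarith [Real.pi_pos]

/-- polar-type coordinates with clamped radius -/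
noncomputable def pol (w : ℂ) : ℂ :=
  Complex.exp (⟨min w.re (Real.log (1/2)), w.im⟩ : ℂ)

theorem pol_cont : Continuous pol := by
  unfold pol
  refine Complex.continuous_exp.comp ?_
  have : (fun w : ℂ => (⟨min w.re (Real.log (1/2)), w.im⟩ : ℂ)) =
    fun w : ℂ => ((min w.re (Real.log (1/2)) : ℝ) : ℂ) + (w.im : ℂ) * Complex.I := by
    funext w; apply Complex.ext <;> simp
  rw [this]
  fun_prop

theorem pol_ne (w : ℂ) : pol w ≠ 0 := Complex.exp_ne_zero _

theorem pol_norm (w : ℂ) : ‖pol w‖ ≤ 1/2 := by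
  rw [pol, Complex.norm_exp]
  calc Real.exp (min w.re (Real.log (1/2))) ≤ Real.exp (Real.log (1/2)) :=
        Real.exp_le_exp.2 (min_le_right _ _)
    _ = 1/2 := Real.exp_log (by norm_num)

theorem pol_add (w : ℂ) (θ : ℝ) : pol (w + θ * Complex.I) = pol w * Complex.exp (θ * Complex.I) := by
  rw [pol, pol, ← Complex.exp_add]
  congr 1
  apply Complex.ext <;> simp

theorem pol_log {z : ℂ} (hz : z ≠ 0) (hn : ‖z‖ ≤ 1/2) : pol (Complex.log z) = z := by
  have : (⟨min (Complex.log z).re (Real.log (1/2)), (Complex.log z).im⟩ : ℂ) = Complex.log z := by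
    apply Complex.ext
    · simp only [Complex.log_re]
      exact min_eq_left (Real.log_le_log (norm_pos_iff.2 hz) hn)
    · rfl
  rw [pol, this, Complex.exp_log hz]

theorem local_deg (g : ℝ × ℝ → ℂ) (hg : ContinuousOn g (Metric.ball 0 1))
    (hi : InjOn g (Metric.ball 0 1)) (δ : ℝ) (hδ : 0 < δ) (hδ' : δ ≤ 1/4) :
    bdeg (fun x y => g (x, 0) - g (0, y)) (-δ) δ (-δ) δ ≠ 0 := by
  have memball : ∀ x y : ℝ, |x| < 1 → |y| < 1 → (x, y) ∈ Metric.ball (0 : ℝ × ℝ) 1 := by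
    intro x y hx hy
    rw [mem_ball_zero_iff, Prod.norm_def, max_lt_iff]
    exact ⟨hx, hy⟩
  let cl : ℝ → ℝ := fun u => max 0 (min u 1)
  have hcl : Continuous cl := by fun_prop
  have hcl0 : ∀ u, 0 ≤ cl u := fun u => le_max_left _ _
  have hcl1 : ∀ u, cl u ≤ 1 := fun u => max_le (by norm_num) (min_le_right _ _)
  let A : ℝ × ℂ → ℝ × ℝ := fun q => ((pol q.2).re * (1 - cl q.1 / 2), - (cl q.1) * (pol q.2).im / 2)
  let B : ℝ × ℂ → ℝ × ℝ := fun q => (- (cl q.1) * (pol q.2).re / 2, (pol q.2).im * (1 - cl q.1 / 2))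
  have hpc := pol_cont
  have hA : Continuous A := by
    have h1 : Continuous fun q : ℝ × ℂ => pol q.2 := pol_cont.comp continuous_snd
    have h2 : Continuous fun q : ℝ × ℂ => cl q.1 := hcl.comp continuous_fst
    have h3 := Complex.continuous_re.comp h1
    have h4 := Complex.continuous_im.comp h1
    simp only [Function.comp_def] at h3 h4
    fun_prop
  have hB : Continuous B := by
    have h1 : Continuous fun q : ℝ × ℂ => pol q.2 := pol_cont.comp continuous_snd
    have h2 : Continuous fun q : ℝ × ℂ => cl q.1 := hcl.comp continuous_fst
    have h3 := Complex.continuous_re.comp h1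
    have h4 := Complex.continuous_im.comp h1
    simp only [Function.comp_def] at h3 h4
    fun_prop
  have small : ∀ c x : ℝ, 0 ≤ c → c ≤ 1 → |x| ≤ 1/2 → |c * x| < 1 := by
    intro c x h0 h1 hx
    rw [abs_mul, abs_of_nonneg h0]
    nlinarith [abs_nonneg x]
  have hre : ∀ w, |(pol w).re| ≤ 1/2 := fun w => (Complex.abs_re_le_norm _).trans (pol_norm w)
  have him : ∀ w, |(pol w).im| ≤ 1/2 := fun w => (Complex.abs_im_le_norm _).trans (pol_norm w)
  have hAm : ∀ q, A q ∈ Metric.ball (0 : ℝ × ℝ) 1 := by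
    intro q
    have h0 := hcl0 q.1
    have h1 := hcl1 q.1
    apply memball
    · rw [mul_comm]; exact small _ _ (by linarith) (by linarith) (hre _)
    · rw [show - (cl q.1) * (pol q.2).im / 2 = -((cl q.1 / 2) * (pol q.2).im) by ring, abs_neg]
      exact small _ _ (by linarith) (by linarith) (him _)
  have hBm : ∀ q, B q ∈ Metric.ball (0 : ℝ × ℝ) 1 := by
    intro q
    have h0 := hcl0 q.1
    have h1 := hcl1 q.1
    apply memball
    · rw [show - (cl q.1) * (pol q.2).re / 2 = -((cl q.1 / 2) * (pol q.2).re) by ring, abs_neg]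
      exact small _ _ (by linarith) (by linarith) (hre _)
    · rw [mul_comm]; exact small _ _ (by linarith) (by linarith) (him _)
  obtain ⟨Λ, hΛ, hΛe⟩ := aux_lift (fun q : ℝ × ℂ => g (A q) - g (B q))
    ((hg.comp_continuous hA hAm).sub (hg.comp_continuous hB hBm)) (by
      intro q h
      have h1 := hi (hAm q) (hBm q) (sub_eq_zero.1 h)
      have h2 := congrArg Prod.fst h1
      have h3 := congrArg Prod.snd h1
      simp only [A, B] at h2 h3
      apply pol_ne q.2
      apply Complex.ext
      · simp only [Complex.zero_re]; linarith
      · simp only [Complex.zero_im]; linarith)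
  -- period
  have e2 : ∀ w : ℂ, pol (w + (2 * Real.pi : ℝ) * Complex.I) = pol w := by
    intro w; rw [pol_add]; push_cast; rw [Complex.exp_two_pi_mul_I, mul_one]
  have e1 : ∀ w : ℂ, pol (w + (Real.pi : ℝ) * Complex.I) = - pol w := by
    intro w; rw [pol_add, Complex.exp_pi_mul_I]; ring
  have c1 : ∀ q q' : ℝ × ℂ, Λ (q.1, q.2 + (2 * Real.pi : ℝ) * Complex.I) - Λ q
      = Λ (q'.1, q'.2 + (2 * Real.pi : ℝ) * Complex.I) - Λ q' := by
    intro q q'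
    refine aux_const (S := univ) isPreconnected_univ
      (F := fun q : ℝ × ℂ => Λ (q.1, q.2 + (2 * Real.pi : ℝ) * Complex.I) - Λ q)
      (k := 1) ?_ ?_ (mem_univ _) (mem_univ _)
    · apply Continuous.continuousOn; fun_prop
    · intro x _
      rw [Complex.exp_sub, hΛe, hΛe]
      have : A (x.1, x.2 + (2 * Real.pi : ℝ) * Complex.I) = A x := by simp only [A, e2]
      rw [this]
      have : B (x.1, x.2 + (2 * Real.pi : ℝ) * Complex.I) = B x := by simp only [B, e2]
      rw [this, div_self]
      rw [← hΛe]; exact Complex.exp_ne_zero _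
  have k1 : ∀ w w' : ℂ, Λ (1, w + (Real.pi : ℝ) * Complex.I) - Λ (1, w)
      = Λ (1, w' + (Real.pi : ℝ) * Complex.I) - Λ (1, w') ∧
      Complex.exp (Λ (1, w + (Real.pi : ℝ) * Complex.I) - Λ (1, w)) = -1 := by
    have hexp : ∀ w, Complex.exp (Λ (1, w + (Real.pi : ℝ) * Complex.I) - Λ (1, w)) = -1 := by
      intro w
      have hc : cl 1 = 1 := by simp [cl]
      have hs : g (A (1, w + (Real.pi : ℝ) * Complex.I)) - g (B (1, w + (Real.pi : ℝ) * Complex.I))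
        = -(g (A (1, w)) - g (B (1, w))) := by
        have h1 : A (1, w + (Real.pi : ℝ) * Complex.I) = B (1, w) := by
          simp only [A, B, e1, hc, Complex.neg_re, Complex.neg_im]
          congr 1 <;> ring
        have h2 : B (1, w + (Real.pi : ℝ) * Complex.I) = A (1, w) := by
          simp only [A, B, e1, hc, Complex.neg_re, Complex.neg_im]
          congr 1 <;> ring
        rw [h1, h2]; ring
      rw [Complex.exp_sub, hΛe, hΛe, hs, neg_div, div_self]
      rw [← hΛe]; exact Complex.exp_ne_zero _
    intro w w'
    refine ⟨?_, hexp w⟩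
    exact aux_const (S := univ) isPreconnected_univ
      (F := fun w : ℂ => Λ (1, w + (Real.pi : ℝ) * Complex.I) - Λ (1, w))
      (k := -1) (by apply Continuous.continuousOn; fun_prop) (fun x _ => hexp x) (mem_univ _) (mem_univ _)
  have cne : ∀ q : ℝ × ℂ, Λ (q.1, q.2 + (2 * Real.pi : ℝ) * Complex.I) - Λ q ≠ 0 := by
    intro q h
    rw [c1 q (1, 0)] at h
    simp only [zero_add] at h
    obtain ⟨h1, h2⟩ := k1 0 ((Real.pi : ℝ) * Complex.I)
    rw [zero_add] at h1 h2
    rw [show ((Real.pi : ℝ) * Complex.I + (Real.pi : ℝ) * Complex.I : ℂ)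
      = (2 * Real.pi : ℝ) * Complex.I by push_cast; ring] at h1
    have : Λ (1, (Real.pi : ℝ) * Complex.I) - Λ (1, 0) = 0 := by linear_combination (h + h1) / 2
    rw [this] at h2
    norm_num at h2
  -- sides
  have side : ∀ (θ : ℝ) (x y : ℝ → ℝ), Continuous x → Continuous y →
      (∀ t ∈ uIcc (-δ) δ, |x t| ≤ δ ∧ |y t| ≤ δ ∧
        0 < ((⟨x t, y t⟩ : ℂ) * Complex.exp (-θ * Complex.I)).re) →
      dlog (fun t => g (x t, 0) - g (0, y t)) (-δ) δ =
        Λ (0, Complex.log ((⟨x δ, y δ⟩ : ℂ) * Complex.exp (-θ * Complex.I)) + θ * Complex.I) -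
        Λ (0, Complex.log ((⟨x (-δ), y (-δ)⟩ : ℂ) * Complex.exp (-θ * Complex.I)) + θ * Complex.I) := by
    intro θ x y hx hy H
    refine dlog_eq (g := fun t =>
      Λ (0, Complex.log ((⟨x t, y t⟩ : ℂ) * Complex.exp (-θ * Complex.I)) + θ * Complex.I)) ⟨?_, ?_⟩
    · refine hΛ.comp_continuousOn ?_
      refine continuousOn_const.prodMk (ContinuousOn.add ?_ continuousOn_const)
      refine ContinuousOn.clog ?_ ?_
      · have : (fun t => (⟨x t, y t⟩ : ℂ) * Complex.exp (-θ * Complex.I)) =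
            fun t => ((x t : ℂ) + (y t : ℂ) * Complex.I) * Complex.exp (-θ * Complex.I) := by
          funext t; congr 1; apply Complex.ext <;> simp
        rw [this]
        apply Continuous.continuousOn; fun_prop
      · intro t ht
        exact Or.inl (H t ht).2.2
    · intro t ht
      obtain ⟨h1, h2, h3⟩ := H t ht
      have hP : pol (Complex.log ((⟨x t, y t⟩ : ℂ) * Complex.exp (-θ * Complex.I)) + θ * Complex.I)
          = ⟨x t, y t⟩ := by
        rw [pol_add, pol_log, mul_assoc, ← Complex.exp_add]
        · simp
        · intro h; rw [h] at h3; simp at h3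
        · have : ‖Complex.exp (-θ * Complex.I)‖ = 1 := by
            have := Complex.norm_exp_ofReal_mul_I (-θ)
            push_cast at this; exact this
          rw [norm_mul, this, mul_one]
          refine (Complex.norm_le_abs_re_add_abs_im _).trans ?_
          simp only
          linarith
      have hc : cl 0 = 0 := by simp [cl]
      simp only
      rw [hΛe]
      simp only [A, B, hP, hc]
      simp
  have hu : uIcc (-δ) δ = Icc (-δ) δ := uIcc_of_le (by linarith)
  have x0 : Complex.exp (-(0:ℝ) * Complex.I) = 1 := by simp
  have x1 : Complex.exp (-(Real.pi / 2 : ℝ) * Complex.I) = -Complex.I := by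
    rw [neg_mul, Complex.exp_neg]; push_cast
    rw [Complex.exp_pi_div_two_mul_I, Complex.inv_I]
  have x2 : Complex.exp (-(Real.pi : ℝ) * Complex.I) = -1 := by
    rw [neg_mul, Complex.exp_neg, Complex.exp_pi_mul_I]; norm_num
  have x3 : Complex.exp (-(3 * (Real.pi / 2) : ℝ) * Complex.I) = Complex.I := by
    rw [show (-(3 * (Real.pi / 2) : ℝ) * Complex.I : ℂ)
      = (-(Real.pi / 2 : ℝ) * Complex.I) + (-(Real.pi : ℝ) * Complex.I) by push_cast; ring,
      Complex.exp_add, x1, x2]; ring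
  have R := side 0 (fun _ => δ) (fun t => t) (by fun_prop) (by fun_prop) (by
    intro t ht; rw [hu] at ht; rw [x0]
    refine ⟨by rw [abs_of_pos hδ], abs_le.2 ⟨ht.1, ht.2⟩, by simpa using hδ⟩)
  have T := side (Real.pi / 2) (fun t => t) (fun _ => δ) (by fun_prop) (by fun_prop) (by
    intro t ht; rw [hu] at ht; rw [x1]
    refine ⟨abs_le.2 ⟨ht.1, ht.2⟩, by rw [abs_of_pos hδ], by simpa using hδ⟩)
  have Lf := side Real.pi (fun _ => -δ) (fun t => t) (by fun_prop) (by fun_prop) (by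
    intro t ht; rw [hu] at ht; rw [x2]
    refine ⟨by rw [abs_neg, abs_of_pos hδ], abs_le.2 ⟨ht.1, ht.2⟩, by simpa using hδ⟩)
  have Bt := side (3 * (Real.pi / 2)) (fun t => t) (fun _ => -δ) (by fun_prop) (by fun_prop) (by
    intro t ht; rw [hu] at ht; rw [x3]
    refine ⟨abs_le.2 ⟨ht.1, ht.2⟩, by rw [abs_neg, abs_of_pos hδ], by simpa using hδ⟩)
  rw [x0] at R
  rw [x1] at T
  rw [x2] at Lf
  rw [x3] at Bt
  unfold bdeg
  rw [R, T, Lf, Bt]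
  -- corners
  have r1 := log_rot (u := ⟨δ, δ⟩) hδ
  have r2 := log_rot (u := -Complex.I * ⟨-δ, δ⟩) (by simpa using hδ)
  have r3 := log_rot (u := -⟨-δ, -δ⟩) (by simpa using hδ)
  have r4 := log_rot (u := Complex.I * ⟨δ, -δ⟩) (by simpa using hδ)
  have q1 : Complex.log ((⟨δ, δ⟩ : ℂ) * -Complex.I) + (Real.pi / 2 : ℝ) * Complex.I
     = Complex.log ((⟨δ, δ⟩ : ℂ) * 1) + (0:ℝ) * Complex.I := by
    rw [mul_comm _ (-Complex.I), r1]; simp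
  have q2 : Complex.log ((⟨-δ, δ⟩ : ℂ) * -1) + (Real.pi : ℝ) * Complex.I
     = Complex.log ((⟨-δ, δ⟩ : ℂ) * -Complex.I) + (Real.pi / 2 : ℝ) * Complex.I := by
    rw [mul_comm _ (-Complex.I), ← r2, show -Complex.I * (-Complex.I * ⟨-δ, δ⟩) = (⟨-δ, δ⟩ : ℂ) * -1 by
      rw [← mul_assoc, show -Complex.I * -Complex.I = -1 by simp]; ring]
    push_cast; ring
  have q3 : Complex.log ((⟨-δ, -δ⟩ : ℂ) * Complex.I) + (3 * (Real.pi / 2) : ℝ) * Complex.I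
     = Complex.log ((⟨-δ, -δ⟩ : ℂ) * -1) + (Real.pi : ℝ) * Complex.I := by
    rw [mul_neg_one, ← r3, show -Complex.I * (-⟨-δ, -δ⟩) = (⟨-δ, -δ⟩ : ℂ) * Complex.I by ring]
    push_cast; ring
  have q4 : Complex.log ((⟨δ, -δ⟩ : ℂ) * Complex.I) + (3 * (Real.pi / 2) : ℝ) * Complex.I
     = (Complex.log ((⟨δ, -δ⟩ : ℂ) * 1) + (0:ℝ) * Complex.I) + (2 * Real.pi : ℝ) * Complex.I := by
    rw [mul_comm _ Complex.I, ← r4, show -Complex.I * (Complex.I * ⟨δ, -δ⟩) = (⟨δ, -δ⟩ : ℂ) * 1 by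
      rw [← mul_assoc, show -Complex.I * Complex.I = 1 by simp]; ring]
    push_cast; ring
  rw [q1, q2, q3, q4]
  intro h
  apply cne (0, (Complex.log ((⟨δ, -δ⟩ : ℂ) * 1) + (0:ℝ) * Complex.I))
  simp only
  linear_combination -h


def cc (z : ℝ × ℝ) : ℂ := ⟨z.1, z.2⟩

theorem cc_cont : Continuous cc := Complex.equivRealProdCLM.symm.continuous

theorem cc_inj {z w : ℝ × ℝ} (h : cc z = cc w) : z = w :=
  Prod.ext (congrArg Complex.re h) (congrArg Complex.im h)

theorem bdeg_swap_s {D : ℝ → ℝ → ℂ} {a b c d : ℝ}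
    (h1 : ContinuousOn (fun s => D s c) (uIcc a b)) (h1' : ∀ s ∈ uIcc a b, D s c ≠ 0)
    (h2 : ContinuousOn (fun s => D s d) (uIcc a b)) (h2' : ∀ s ∈ uIcc a b, D s d ≠ 0) :
    bdeg D b a c d = - bdeg D a b c d := by
  unfold bdeg
  rw [dlog_swap h1 h1', dlog_swap h2 h2']
  ring

theorem bdeg_swap_t {D : ℝ → ℝ → ℂ} {a b c d : ℝ}
    (h1 : ContinuousOn (fun s => D a s) (uIcc c d)) (h1' : ∀ s ∈ uIcc c d, D a s ≠ 0)
    (h2 : ContinuousOn (fun s => D b s) (uIcc c d)) (h2' : ∀ s ∈ uIcc c d, D b s ≠ 0) :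
    bdeg D a b d c = - bdeg D a b c d := by
  unfold bdeg
  rw [dlog_swap h1 h1', dlog_swap h2 h2']
  ring

section single
variable {D : ℝ → ℝ → ℂ} {r τ : ℝ}

theorem single_contS (hD : ContinuousOn (fun x : ℝ × ℝ => D x.1 x.2) (Icc 0 1 ×ˢ Icc 0 1))
    {t : ℝ} (ht : t ∈ Icc (0:ℝ) 1) {a b : ℝ} (ha : a ∈ Icc (0:ℝ) 1) (hb : b ∈ Icc (0:ℝ) 1) :
    ContinuousOn (fun s => D s t) (uIcc a b) :=
  hD.comp (f := fun s => (s, t)) (by fun_prop) (fun _ hs => ⟨uIcc_subset_Icc ha hb hs, ht⟩)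

theorem single_contT (hD : ContinuousOn (fun x : ℝ × ℝ => D x.1 x.2) (Icc 0 1 ×ˢ Icc 0 1))
    {t : ℝ} (ht : t ∈ Icc (0:ℝ) 1) {a b : ℝ} (ha : a ∈ Icc (0:ℝ) 1) (hb : b ∈ Icc (0:ℝ) 1) :
    ContinuousOn (fun s => D t s) (uIcc a b) :=
  hD.comp (f := fun s => (t, s)) (by fun_prop) (fun _ hs => ⟨ht, uIcc_subset_Icc ha hb hs⟩)

theorem single_zero (hD : ContinuousOn (fun x : ℝ × ℝ => D x.1 x.2) (Icc 0 1 ×ˢ Icc 0 1))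
    (h0 : ∀ s ∈ Icc (0:ℝ) 1, ∀ t ∈ Icc (0:ℝ) 1, D s t = 0 → s = r ∧ t = τ)
    {a b c d : ℝ} (ha : a ∈ Icc (0:ℝ) 1) (hb : b ∈ Icc (0:ℝ) 1)
    (hc : c ∈ Icc (0:ℝ) 1) (hd : d ∈ Icc (0:ℝ) 1) (h : r ∉ uIcc a b ∨ τ ∉ uIcc c d) :
    bdeg D a b c d = 0 := by
  apply bdeg_zero
  · exact hD.mono (prod_mono (uIcc_subset_Icc ha hb) (uIcc_subset_Icc hc hd))
  · intro s hs t ht h'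
    obtain ⟨rfl, rfl⟩ := h0 s (uIcc_subset_Icc ha hb hs) t (uIcc_subset_Icc hc hd ht) h'
    tauto

theorem single_nest (hD : ContinuousOn (fun x : ℝ × ℝ => D x.1 x.2) (Icc 0 1 ×ˢ Icc 0 1))
    (h0 : ∀ s ∈ Icc (0:ℝ) 1, ∀ t ∈ Icc (0:ℝ) 1, D s t = 0 → s = r ∧ t = τ)
    {a b c d A B C E : ℝ} (hA : A ∈ Icc (0:ℝ) 1) (hB : B ∈ Icc (0:ℝ) 1)
    (hC : C ∈ Icc (0:ℝ) 1) (hE : E ∈ Icc (0:ℝ) 1)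
    (h1 : A ≤ a) (h2 : a < r) (h3 : r < b) (h4 : b ≤ B)
    (h5 : C ≤ c) (h6 : c < τ) (h7 : τ < d) (h8 : d ≤ E) :
    bdeg D A B C E = bdeg D a b c d := by
  have ha : a ∈ Icc (0:ℝ) 1 := ⟨by linarith [hA.1], by linarith [hB.2]⟩
  have hb : b ∈ Icc (0:ℝ) 1 := ⟨by linarith [hA.1], by linarith [hB.2]⟩
  have hc : c ∈ Icc (0:ℝ) 1 := ⟨by linarith [hC.1], by linarith [hE.2]⟩
  have hd : d ∈ Icc (0:ℝ) 1 := ⟨by linarith [hC.1], by linarith [hE.2]⟩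
  have nS : ∀ t ∈ Icc (0:ℝ) 1, t ≠ τ → ∀ x ∈ Icc (0:ℝ) 1, ∀ y ∈ Icc (0:ℝ) 1,
      ∀ s ∈ uIcc x y, D s t ≠ 0 :=
    fun t ht hne x hx y hy s hs h => hne (h0 s (uIcc_subset_Icc hx hy hs) t ht h).2
  have nT : ∀ s ∈ Icc (0:ℝ) 1, s ≠ r → ∀ x ∈ Icc (0:ℝ) 1, ∀ y ∈ Icc (0:ℝ) 1,
      ∀ t ∈ uIcc x y, D s t ≠ 0 :=
    fun s hs hne x hx y hy t ht h => hne (h0 s hs t (uIcc_subset_Icc hx hy ht) h).1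
  have hCn : C ≠ τ := by linarith [lt_of_le_of_lt h5 h6] |> fun h : C < τ => h.ne
  have hEn : E ≠ τ := (lt_of_lt_of_le h7 h8).ne'
  rw [bdeg_split_s (m := a) (single_contS hD hC hA hB) (nS _ hC hCn _ hA _ hB)
    (single_contS hD hE hA hB) (nS _ hE hEn _ hA _ hB)
    (by rw [uIcc_of_le (by linarith)]; exact ⟨h1, by linarith⟩),
    single_zero hD h0 hA ha hC hE (Or.inl (by rw [uIcc_of_le h1]; exact fun h => absurd h.2 (by linarith))),
    zero_add,
    bdeg_split_s (m := b) (single_contS hD hC ha hB) (nS _ hC hCn _ ha _ hB)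
    (single_contS hD hE ha hB) (nS _ hE hEn _ ha _ hB)
    (by rw [uIcc_of_le (by linarith)]; exact ⟨by linarith, h4⟩),
    single_zero hD h0 hb hB hC hE (Or.inl (by rw [uIcc_of_le h4]; exact fun h => absurd h.1 (by linarith))),
    add_zero]
  rw [bdeg_split_t (m := c) (single_contT hD ha hC hE) (nT _ ha h2.ne _ hC _ hE)
    (single_contT hD hb hC hE) (nT _ hb h3.ne' _ hC _ hE)
    (by rw [uIcc_of_le (by linarith)]; exact ⟨h5, by linarith⟩),
    single_zero hD h0 ha hb hC hc (Or.inr (by rw [uIcc_of_le h5]; exact fun h => absurd h.2 (by linarith))),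
    zero_add,
    bdeg_split_t (m := d) (single_contT hD ha hc hE) (nT _ ha h2.ne _ hc _ hE)
    (single_contT hD hb hc hE) (nT _ hb h3.ne' _ hc _ hE)
    (by rw [uIcc_of_le (by linarith)]; exact ⟨by linarith, h8⟩),
    single_zero hD h0 ha hb hd hE (Or.inr (by rw [uIcc_of_le h8]; exact fun h => absurd h.1 (by linarith))),
    add_zero]

/-- strictly between -/
def SBt (x y z : ℝ) : Prop := (x < z ∧ z < y) ∨ (y < z ∧ z < x)

theorem single_ne (hD : ContinuousOn (fun x : ℝ × ℝ => D x.1 x.2) (Icc 0 1 ×ˢ Icc 0 1))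
    (h0 : ∀ s ∈ Icc (0:ℝ) 1, ∀ t ∈ Icc (0:ℝ) 1, D s t = 0 → s = r ∧ t = τ)
    {a b c d a' b' c' d' : ℝ} (ha : a ∈ Icc (0:ℝ) 1) (hb : b ∈ Icc (0:ℝ) 1)
    (hc : c ∈ Icc (0:ℝ) 1) (hd : d ∈ Icc (0:ℝ) 1)
    (ha' : a' ∈ Icc (0:ℝ) 1) (hb' : b' ∈ Icc (0:ℝ) 1)
    (hc' : c' ∈ Icc (0:ℝ) 1) (hd' : d' ∈ Icc (0:ℝ) 1)
    (h1 : SBt a b r) (h2 : SBt c d τ) (h1' : SBt a' b' r) (h2' : SBt c' d' τ)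
    (h : bdeg D a b c d ≠ 0) : bdeg D a' b' c' d' ≠ 0 := by
  have nS : ∀ t ∈ Icc (0:ℝ) 1, t ≠ τ → ∀ x ∈ Icc (0:ℝ) 1, ∀ y ∈ Icc (0:ℝ) 1,
      ∀ s ∈ uIcc x y, D s t ≠ 0 :=
    fun t ht hne x hx y hy s hs h => hne (h0 s (uIcc_subset_Icc hx hy hs) t ht h).2
  have nT : ∀ s ∈ Icc (0:ℝ) 1, s ≠ r → ∀ x ∈ Icc (0:ℝ) 1, ∀ y ∈ Icc (0:ℝ) 1,
      ∀ t ∈ uIcc x y, D s t ≠ 0 :=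
    fun s hs hne x hx y hy t ht h => hne (h0 s hs t (uIcc_subset_Icc hx hy ht) h).1
  -- compare with the full square
  have key : ∀ {a b c d : ℝ}, a ∈ Icc (0:ℝ) 1 → b ∈ Icc (0:ℝ) 1 → c ∈ Icc (0:ℝ) 1 →
      d ∈ Icc (0:ℝ) 1 → SBt a b r → SBt c d τ → (bdeg D a b c d ≠ 0 ↔ bdeg D 0 1 0 1 ≠ 0) := by
    intro a b c d ha hb hc hd h1 h2
    have z : (0:ℝ) ∈ Icc (0:ℝ) 1 := by simp
    have o : (1:ℝ) ∈ Icc (0:ℝ) 1 := by simp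
    have S : ∀ {a b c d : ℝ}, a ∈ Icc (0:ℝ) 1 → b ∈ Icc (0:ℝ) 1 → c ∈ Icc (0:ℝ) 1 →
      d ∈ Icc (0:ℝ) 1 → c ≠ τ → d ≠ τ → bdeg D b a c d = - bdeg D a b c d :=
      fun ha hb hc hd hcn hdn => bdeg_swap_s (single_contS hD hc ha hb) (nS _ hc hcn _ ha _ hb)
        (single_contS hD hd ha hb) (nS _ hd hdn _ ha _ hb)
    have T : ∀ {a b c d : ℝ}, a ∈ Icc (0:ℝ) 1 → b ∈ Icc (0:ℝ) 1 → c ∈ Icc (0:ℝ) 1 →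
      d ∈ Icc (0:ℝ) 1 → a ≠ r → b ≠ r → bdeg D a b d c = - bdeg D a b c d :=
      fun ha hb hc hd hcn hdn => bdeg_swap_t (single_contT hD ha hc hd) (nT _ ha hcn _ hc _ hd)
        (single_contT hD hb hc hd) (nT _ hb hdn _ hc _ hd)
    rcases h1 with ⟨h1, h1'⟩ | ⟨h1, h1'⟩ <;> rcases h2 with ⟨h2, h2'⟩ | ⟨h2, h2'⟩
    · rw [single_nest hD h0 z o z o ha.1 h1 h1' hb.2 hc.1 h2 h2' hd.2]
    · rw [single_nest hD h0 z o z o ha.1 h1 h1' hb.2 hd.1 h2 h2' hc.2,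
        T ha hb hd hc h1.ne h1'.ne', neg_ne_zero]
    · rw [single_nest hD h0 z o z o hb.1 h1 h1' ha.2 hc.1 h2 h2' hd.2,
        S hb ha hc hd h2.ne h2'.ne', neg_ne_zero]
    · rw [single_nest hD h0 z o z o hb.1 h1 h1' ha.2 hd.1 h2 h2' hc.2,
        S hb ha hc hd h2'.ne' h2.ne, T hb ha hd hc h1.ne h1'.ne', neg_neg]
  rw [key ha' hb' hc' hd' h1' h2']
  rwa [key ha hb hc hd h1 h2] at h
end single

theorem arc_param (γ : Arc) (G : ℝ → ℝ × ℝ) (hG : ContinuousOn G (Ioo (-1) 1))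
    (hGi : InjOn G (Ioo (-1) 1)) (hm : ∀ x ∈ Ioo (-1:ℝ) 1, G x ∈ γ.img) {r : ℝ}
    (hr : r ∈ Icc (0:ℝ) 1) (hr0 : G 0 = γ.toFun r) :
    ∃ σ : ℝ → ℝ, ContinuousOn σ (Ioo (-1) 1) ∧ InjOn σ (Ioo (-1) 1) ∧
      (∀ x ∈ Ioo (-1:ℝ) 1, σ x ∈ Icc (0:ℝ) 1 ∧ γ.toFun (σ x) = G x) ∧ σ 0 = r := by
  have hm' : ∀ x, ∃ s : Icc (0:ℝ) 1, x ∈ Ioo (-1:ℝ) 1 → γ.toFun s = G x := by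
    intro x
    by_cases hx : x ∈ Ioo (-1:ℝ) 1
    · obtain ⟨s, hs, h⟩ := hm x hx
      exact ⟨⟨s, hs⟩, fun _ => h⟩
    · exact ⟨⟨0, by simp⟩, fun h => absurd h hx⟩
  choose σ hσ using hm'
  have hemb : Topology.IsClosedEmbedding ((Icc (0:ℝ) 1).domRestrict γ.toFun) :=
    (continuousOn_iff_continuous_domRestrict.1 γ.contOn).isClosedEmbedding
      (injOn_iff_injective.1 γ.injOn)
  have hc : ContinuousOn σ (Ioo (-1) 1) := by
    rw [hemb.isInducing.continuousOn_iff]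
    exact hG.congr (fun x hx => hσ x hx)
  refine ⟨fun x => σ x, ?_, ?_, ?_, ?_⟩
  · exact continuous_subtype_val.comp_continuousOn hc
  · intro x hx y hy h
    apply hGi hx hy
    rw [← hσ x hx, ← hσ y hy]
    simp only at h
    rw [h]
  · intro x hx
    exact ⟨(σ x).2, hσ x hx⟩
  · apply γ.injOn (σ 0).2 hr
    rw [hσ 0 (by norm_num), hr0]

theorem cross_ne {γ₁ γ₂ : Arc} {q : ℝ × ℝ} (hX : CrossesProperlyAt γ₁ γ₂ q) {r τ : ℝ}
    (hr : r ∈ Icc (0:ℝ) 1) (hτ : τ ∈ Icc (0:ℝ) 1) (hrq : γ₁.toFun r = q) (hτq : γ₂.toFun τ = q)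
    (huniq : ∀ s ∈ Icc (0:ℝ) 1, ∀ t ∈ Icc (0:ℝ) 1, γ₁.toFun s = γ₂.toFun t → s = r ∧ t = τ)
    {a b c d : ℝ} (ha : a ∈ Icc (0:ℝ) 1) (hb : b ∈ Icc (0:ℝ) 1)
    (hc : c ∈ Icc (0:ℝ) 1) (hd : d ∈ Icc (0:ℝ) 1)
    (h1 : SBt a b r) (h2 : SBt c d τ) :
    bdeg (fun s t => cc (γ₁.toFun s) - cc (γ₂.toFun t)) a b c d ≠ 0 := by
  obtain ⟨-, -, h, hq, htgt, hq0, ax1, ax2⟩ := hX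
  have memball : ∀ x y : ℝ, x ∈ Ioo (-1:ℝ) 1 → y ∈ Ioo (-1:ℝ) 1 →
      (x, y) ∈ Metric.ball (0 : ℝ × ℝ) 1 := by
    intro x y hx hy
    rw [mem_ball_zero_iff, Prod.norm_def, max_lt_iff]
    exact ⟨abs_lt.2 hx, abs_lt.2 hy⟩
  let G : ℝ × ℝ → ℝ × ℝ := h.invFun
  have hGc : ContinuousOn G (Metric.ball 0 1) := htgt ▸ h.continuousOn_invFun
  have hGi : InjOn G (Metric.ball 0 1) := by
    intro x hx y hy hxy
    rw [← htgt] at hx hy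
    rw [← h.right_inv' hx, ← h.right_inv' hy]
    exact congrArg _ hxy
  have hG0 : G 0 = q := by rw [← hq0]; exact h.left_inv' hq
  have z1 : (0:ℝ) ∈ Ioo (-1:ℝ) 1 := by norm_num
  have hm1 : ∀ x ∈ Ioo (-1:ℝ) 1, G (x, 0) ∈ γ₁.img := by
    intro x hx
    have : (x, (0:ℝ)) ∈ h '' (h.source ∩ γ₁.img) := by
      rw [ax1]; exact ⟨memball _ _ hx z1, rfl⟩
    obtain ⟨y, ⟨hy1, hy2⟩, hy⟩ := this
    rw [← hy]
    have : G (h y) = y := h.left_inv' hy1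
    rw [this]; exact hy2
  have hm2 : ∀ x ∈ Ioo (-1:ℝ) 1, G (0, x) ∈ γ₂.img := by
    intro x hx
    have : ((0:ℝ), x) ∈ h '' (h.source ∩ γ₂.img) := by
      rw [ax2]; exact ⟨memball _ _ z1 hx, rfl⟩
    obtain ⟨y, ⟨hy1, hy2⟩, hy⟩ := this
    rw [← hy]
    have : G (h y) = y := h.left_inv' hy1
    rw [this]; exact hy2
  obtain ⟨σ, σc, σi, σm, σ0⟩ := arc_param γ₁ (fun x => G (x, 0))
    (hGc.comp (by fun_prop) (fun x hx => memball _ _ hx z1))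
    (fun x hx y hy hxy => congrArg Prod.fst (hGi (memball _ _ hx z1) (memball _ _ hy z1) hxy))
    hm1 hr (by rw [hrq]; exact hG0)
  obtain ⟨ρ, ρc, ρi, ρm, ρ0⟩ := arc_param γ₂ (fun x => G (0, x))
    (hGc.comp (by fun_prop) (fun x hx => memball _ _ z1 hx))
    (fun x hx y hy hxy => congrArg Prod.snd (hGi (memball _ _ z1 hx) (memball _ _ z1 hy) hxy))
    hm2 hτ (by rw [hτq]; exact hG0)
  have hL := local_deg (fun z => cc (G z)) (cc_cont.comp_continuousOn hGc)
    (fun x hx y hy hxy => hGi hx hy (cc_inj hxy)) (1/4) (by norm_num) le_rfl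
  have hsub : Icc (-(1/4):ℝ) (1/4) ⊆ Ioo (-1) 1 := fun x hx => ⟨by linarith [hx.1], by linarith [hx.2]⟩
  have hu : uIcc (-(1/4):ℝ) (1/4) = Icc (-(1/4)) (1/4) := uIcc_of_le (by norm_num)
  have mono : ∀ f : ℝ → ℝ, ContinuousOn f (Ioo (-1) 1) → InjOn f (Ioo (-1) 1) →
      MapsTo f (uIcc (-(1/4)) (1/4)) (uIcc (f (-(1/4))) (f (1/4))) ∧
        SBt (f (-(1/4))) (f (1/4)) (f 0) := by
    intro f fc fi
    rcases (fc.mono hsub).strictMonoOn_of_injOn_Icc' (by norm_num) (fi.mono hsub) with hmn | hmn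
    · exact ⟨(show MonotoneOn f (uIcc _ _) from hu ▸ hmn.monotoneOn).mapsTo_uIcc, Or.inl ⟨hmn (by norm_num) (by norm_num) (by norm_num), hmn (by norm_num) (by norm_num) (by norm_num)⟩⟩
    · exact ⟨(show AntitoneOn f (uIcc _ _) from hu ▸ hmn.antitoneOn).mapsTo_uIcc, Or.inr ⟨hmn (by norm_num) (by norm_num) (by norm_num), hmn (by norm_num) (by norm_num) (by norm_num)⟩⟩
  obtain ⟨σmt, σb⟩ := mono σ σc σi
  obtain ⟨ρmt, ρb⟩ := mono ρ ρc ρi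
  rw [σ0] at σb
  rw [ρ0] at ρb
  let D : ℝ → ℝ → ℂ := fun s t => cc (γ₁.toFun s) - cc (γ₂.toFun t)
  have hD : ContinuousOn (fun x : ℝ × ℝ => D x.1 x.2) (Icc 0 1 ×ˢ Icc 0 1) := by
    apply ContinuousOn.sub
    · exact cc_cont.comp_continuousOn (γ₁.contOn.comp continuousOn_fst (fun x hx => hx.1))
    · exact cc_cont.comp_continuousOn (γ₂.contOn.comp continuousOn_snd (fun x hx => hx.2))
  have h0 : ∀ s ∈ Icc (0:ℝ) 1, ∀ t ∈ Icc (0:ℝ) 1, D s t = 0 → s = r ∧ t = τ :=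
    fun s hs t ht h => huniq s hs t ht (cc_inj (sub_eq_zero.1 h))
  have m1 : (-(1/4):ℝ) ∈ Ioo (-1:ℝ) 1 := by norm_num
  have m2 : ((1/4):ℝ) ∈ Ioo (-1:ℝ) 1 := by norm_num
  have i1 := (σm _ m1).1
  have i2 := (σm _ m2).1
  have i3 := (ρm _ m1).1
  have i4 := (ρm _ m2).1
  have bne : ∀ {x y z : ℝ}, SBt x y z → x ≠ z ∧ y ≠ z := by
    rintro x y z (h | h)
    · exact ⟨h.1.ne, h.2.ne'⟩
    · exact ⟨h.2.ne', h.1.ne⟩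
  refine single_ne hD h0 i1 i2 i3 i4 ha hb hc hd σb ρb h1 h2 ?_
  have eS : ∀ y ∈ Ioo (-1:ℝ) 1, ρ y ≠ τ → dlog (fun s => cc (G (s, 0)) - cc (G (0, y))) (-(1/4)) (1/4)
      = dlog (fun s => D s (ρ y)) (σ (-(1/4))) (σ (1/4)) := by
    intro y hy hne
    rw [← dlog_comp (f := fun s => D s (ρ y)) (σc.mono (hu ▸ hsub)) σmt
      (single_contS hD (ρm y hy).1 i1 i2)
      (fun s hs h => hne (h0 s (uIcc_subset_Icc i1 i2 hs) _ (ρm y hy).1 h).2)]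
    apply dlog_congr
    intro t ht
    simp only [D]
    rw [(σm t (hsub (hu ▸ ht))).2, (ρm y hy).2]
  have eT : ∀ y ∈ Ioo (-1:ℝ) 1, σ y ≠ r → dlog (fun s => cc (G (y, 0)) - cc (G (0, s))) (-(1/4)) (1/4)
      = dlog (fun s => D (σ y) s) (ρ (-(1/4))) (ρ (1/4)) := by
    intro y hy hne
    rw [← dlog_comp (f := fun s => D (σ y) s) (ρc.mono (hu ▸ hsub)) ρmt
      (single_contT hD (σm y hy).1 i3 i4)
      (fun s hs h => hne (h0 _ (σm y hy).1 s (uIcc_subset_Icc i3 i4 hs) h).1)]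
    apply dlog_congr
    intro t ht
    simp only [D]
    rw [(ρm t (hsub (hu ▸ ht))).2, (σm y hy).2]
  unfold bdeg at hL ⊢
  rw [eS _ m1 (bne ρb).1, eS _ m2 (bne ρb).2, eT _ m1 (bne σb).1, eT _ m2 (bne σb).2] at hL
  exact hL


structure ALoop where
  α : Fin 4 → Arc
  s : Fin 4 → ℝ
  t : Fin 4 → ℝ
  hs : ∀ i, s i ∈ Icc (0:ℝ) 1
  ht : ∀ i, t i ∈ Icc (0:ℝ) 1
  closed : ∀ i, (α i).toFun (t i) = (α (i+1)).toFun (s (i+1))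

namespace ALoop
variable (K : ALoop)

def supp : Set (ℝ × ℝ) := ⋃ i, (K.α i).toFun '' uIcc (K.s i) (K.t i)

theorem cont (i : Fin 4) : ContinuousOn (K.α i).toFun (uIcc (K.s i) (K.t i)) :=
  (K.α i).contOn.mono (uIcc_subset_Icc (K.hs i) (K.ht i))

theorem compact_supp : IsCompact K.supp :=
  isCompact_iUnion fun i => isCompact_uIcc.image_of_continuousOn (K.cont i)

noncomputable def W (z : ℝ × ℝ) : ℂ :=
  ∑ i, dlog (fun x => cc ((K.α i).toFun x) - cc z) (K.s i) (K.t i)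

theorem W_sub (β : ℝ → ℝ × ℝ) (c d : ℝ) : K.W (β d) - K.W (β c) =
    ∑ i, bdeg (fun x y => cc ((K.α i).toFun x) - cc (β y)) (K.s i) (K.t i) c d := by
  have h0 := K.closed 0
  have h1 := K.closed 1
  have h2 := K.closed 2
  have h3 := K.closed 3
  simp only [show (0:Fin 4) + 1 = 1 from rfl, show (1:Fin 4) + 1 = 2 from rfl,
    show (2:Fin 4) + 1 = 3 from rfl, show (3:Fin 4) + 1 = 0 from rfl] at h0 h1 h2 h3
  simp only [W, bdeg, Fin.sum_univ_four, h0, h1, h2, h3]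
  ring

theorem bdeg_avoid (i : Fin 4) {β : ℝ → ℝ × ℝ} {c d : ℝ} (hβ : ContinuousOn β (uIcc c d))
    (h : ∀ x ∈ uIcc (K.s i) (K.t i), ∀ y ∈ uIcc c d, (K.α i).toFun x ≠ β y) :
    bdeg (fun x y => cc ((K.α i).toFun x) - cc (β y)) (K.s i) (K.t i) c d = 0 := by
  apply bdeg_zero
  · apply ContinuousOn.sub
    · exact cc_cont.comp_continuousOn ((K.cont i).comp continuousOn_fst (fun x hx => hx.1))
    · exact cc_cont.comp_continuousOn (hβ.comp continuousOn_snd (fun x hx => hx.2))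
  · intro x hx y hy h'
    exact h x hx y hy (cc_inj (sub_eq_zero.1 h'))

theorem W_path {β : ℝ → ℝ × ℝ} {c d : ℝ} (hβ : ContinuousOn β (uIcc c d))
    (h : ∀ i, ∀ x ∈ uIcc (K.s i) (K.t i), ∀ y ∈ uIcc c d, (K.α i).toFun x ≠ β y) :
    K.W (β c) = K.W (β d) := by
  have := K.W_sub β c d
  rw [Finset.sum_eq_zero (fun i _ => K.bdeg_avoid i hβ (h i)), sub_eq_zero] at this
  exact this.symm

theorem W_cross (k : Fin 4) {β : ℝ → ℝ × ℝ} {c d : ℝ} (hβ : ContinuousOn β (uIcc c d))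
    (h : ∀ i, i ≠ k → ∀ x ∈ uIcc (K.s i) (K.t i), ∀ y ∈ uIcc c d, (K.α i).toFun x ≠ β y)
    (hk : bdeg (fun x y => cc ((K.α k).toFun x) - cc (β y)) (K.s k) (K.t k) c d ≠ 0) :
    K.W (β c) ≠ K.W (β d) := by
  have := K.W_sub β c d
  rw [Finset.sum_eq_single k (fun i _ hi => K.bdeg_avoid i hβ (h i hi))
    (by simp)] at this
  intro h'
  rw [h', sub_self] at this
  exact hk this.symm

theorem W_joined {z z' : ℝ × ℝ} (h : JoinedIn K.suppᶜ z z') : K.W z = K.W z' := by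
  obtain ⟨p, hp⟩ := h
  have := K.W_path (β := p.extend) (c := 0) (d := 1) p.continuous_extend.continuousOn (by
    intro i x hx y hy h'
    rw [uIcc_of_le zero_le_one] at hy
    rw [Path.extend_apply p hy] at h'
    exact hp ⟨y, hy⟩ (mem_iUnion.2 ⟨i, x, hx, h'⟩))
  simpa using this

theorem W_far {z : ℝ × ℝ} (h : ∀ y ∈ K.supp, ‖cc y‖ < ‖cc z‖) : K.W z = 0 := by
  have hz : cc z ≠ 0 := by
    intro h0
    have := h _ (mem_iUnion.2 ⟨0, K.s 0, left_mem_uIcc, rfl⟩)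
    rw [h0, norm_zero] at this
    linarith [norm_nonneg (cc ((K.α 0).toFun (K.s 0)))]
  have key : ∀ y ∈ K.supp, 0 < (1 - cc y / cc z).re := by
    intro y hy
    have h1 : ‖cc y / cc z‖ < 1 := by
      rw [norm_div, div_lt_one (norm_pos_iff.2 hz)]; exact h y hy
    have := (Complex.re_le_norm (cc y / cc z))
    simp only [Complex.sub_re, Complex.one_re]
    linarith
  have hd : ∀ i, dlog (fun x => cc ((K.α i).toFun x) - cc z) (K.s i) (K.t i) =
      Complex.log (1 - cc ((K.α i).toFun (K.t i)) / cc z)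
        - Complex.log (1 - cc ((K.α i).toFun (K.s i)) / cc z) := by
    intro i
    rw [dlog_eq (g := fun x => Complex.log (1 - cc ((K.α i).toFun x) / cc z) + Complex.log (- cc z))]
    · ring
    · constructor
      · refine ContinuousOn.add (ContinuousOn.clog ?_ ?_) continuousOn_const
        · exact continuousOn_const.sub ((cc_cont.comp_continuousOn (K.cont i)).div_const _)
        · intro x hx
          exact Or.inl (key _ (mem_iUnion.2 ⟨i, x, hx, rfl⟩))
      · intro x hx
        have := key _ (mem_iUnion.2 ⟨i, x, hx, rfl⟩)
        rw [Complex.exp_add, Complex.exp_log, Complex.exp_log (neg_ne_zero.2 hz)]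
        · field_simp
          ring
        · intro h0; rw [h0] at this; simp at this
  have h0 := K.closed 0
  have h1 := K.closed 1
  have h2 := K.closed 2
  have h3 := K.closed 3
  simp only [show (0:Fin 4) + 1 = 1 from rfl, show (1:Fin 4) + 1 = 2 from rfl,
    show (2:Fin 4) + 1 = 3 from rfl, show (3:Fin 4) + 1 = 0 from rfl] at h0 h1 h2 h3
  simp only [W, hd, Fin.sum_univ_four, h0, h1, h2, h3]
  ring

theorem norm_le_cc (z : ℝ × ℝ) : ‖z‖ ≤ ‖cc z‖ := by
  rw [Prod.norm_def]
  exact max_le (Complex.abs_re_le_norm (cc z)) (Complex.abs_im_le_norm (cc z))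

theorem W_outer {V : Type} (γ : V → Arc) (hK : K.supp ⊆ arcUnion γ) {z : ℝ × ℝ}
    (hz : z ∈ closure (contour γ)) (hzK : z ∉ K.supp) : K.W z = 0 := by
  have hop : IsOpen K.suppᶜ := K.compact_supp.isClosed.isOpen_compl
  obtain ⟨ε, hε, hb⟩ := Metric.isOpen_iff.1 hop z hzK
  obtain ⟨x, hx, hxz⟩ := Metric.mem_closure_iff.1 hz ε hε
  have hj : JoinedIn K.suppᶜ z x := by
    refine JoinedIn.mono ?_ hb
    refine ((convex_ball z ε).isPathConnected ⟨z, Metric.mem_ball_self hε⟩).joinedIn _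
      (Metric.mem_ball_self hε) _ (by rw [Metric.mem_ball, dist_comm]; exact hxz)
  rw [K.W_joined hj]
  obtain ⟨hx1, hx2⟩ := hx
  have hsub : (arcUnion γ)ᶜ ⊆ K.suppᶜ := compl_subset_compl.2 hK
  have hxK : x ∈ K.suppᶜ := hsub hx1
  have hpc : IsPathConnected (connectedComponentIn K.suppᶜ x) :=
    (hop.connectedComponentIn.isConnected_iff_isPathConnected).1
      ⟨⟨x, mem_connectedComponentIn hxK⟩, isPreconnected_connectedComponentIn⟩
  obtain ⟨R, hR⟩ := (K.compact_supp.image cc_cont).isBounded.exists_norm_le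
  have : ∃ y ∈ connectedComponentIn K.suppᶜ x, R < ‖cc y‖ := by
    by_contra hcon
    push Not at hcon
    apply hx2
    refine (Metric.isBounded_closedBall (x := (0 : ℝ × ℝ)) (r := R)).subset ?_
    intro y hy
    rw [mem_closedBall_zero_iff]
    exact (norm_le_cc y).trans (hcon y (connectedComponentIn_mono x hsub hy))
  obtain ⟨y, hy, hyR⟩ := this
  rw [K.W_joined ((hpc.joinedIn x (mem_connectedComponentIn hxK) y hy).mono
    (connectedComponentIn_subset _ _))]
  exact K.W_far (fun w hw => lt_of_le_of_lt (hR _ ⟨w, hw, rfl⟩) hyR)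

end ALoop


structure SData {V : Type} (G : SimpleGraph V) (γ : V → Arc) (X : V → V → ℝ) (e : V → ℝ) :
    Prop where
  hX : ∀ u v, G.Adj u v → X u v ∈ Ioo (0:ℝ) 1
  meet : ∀ u v, G.Adj u v → (γ u).toFun (X u v) = (γ v).toFun (X v u)
  uniq : ∀ u v, G.Adj u v → ∀ s ∈ Icc (0:ℝ) 1, ∀ t ∈ Icc (0:ℝ) 1,
    (γ u).toFun s = (γ v).toFun t → s = X u v ∧ t = X v u
  dis : ∀ u v, u ≠ v → ¬ G.Adj u v → ∀ s ∈ Icc (0:ℝ) 1, ∀ t ∈ Icc (0:ℝ) 1,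
    (γ u).toFun s ≠ (γ v).toFun t
  cross : ∀ u v, G.Adj u v → CrossesProperlyAt (γ u) (γ v) ((γ u).toFun (X u v))
  inj : ∀ u v w, G.Adj u v → G.Adj u w → v ≠ w → X u v ≠ X u w
  he : ∀ v, e v = 0 ∨ e v = 1
  out : ∀ v, (γ v).toFun (e v) ∈ closure (contour γ)

def NA {V : Type} (G : SimpleGraph V) (u v : V) : Prop := u ≠ v ∧ ¬ G.Adj u v

theorem NA.symm {V : Type} {G : SimpleGraph V} {u v : V} (h : NA G u v) : NA G v u :=
  ⟨h.1.symm, fun h' => h.2 h'.symm⟩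

section core
variable {V : Type} {G : SimpleGraph V} {γ : V → Arc} {X : V → V → ℝ} {e : V → ℝ}

def Av (γ : V → Arc) (u : V) (s t : ℝ) (v : V) (c d : ℝ) : Prop :=
  ∀ x ∈ uIcc s t, ∀ y ∈ uIcc c d, (γ u).toFun x ≠ (γ v).toFun y

theorem SData.hXI (S : SData G γ X e) {u v : V} (h : G.Adj u v) : X u v ∈ Icc (0:ℝ) 1 :=
  Ioo_subset_Icc_self (S.hX u v h)

theorem SData.heI (S : SData G γ X e) (v : V) : e v ∈ Icc (0:ℝ) 1 := by
  rcases S.he v with h | h <;> rw [h] <;> simp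

theorem SData.av_na (S : SData G γ X e) {u v : V} {s t c d : ℝ} (h : NA G u v)
    (hs : s ∈ Icc (0:ℝ) 1) (ht : t ∈ Icc (0:ℝ) 1) (hc : c ∈ Icc (0:ℝ) 1) (hd : d ∈ Icc (0:ℝ) 1) :
    Av γ u s t v c d := fun x hx y hy =>
  S.dis u v h.1 h.2 x (uIcc_subset_Icc hs ht hx) y (uIcc_subset_Icc hc hd hy)

theorem SData.av_l (S : SData G γ X e) {u v : V} {s t c d : ℝ} (h : G.Adj u v)
    (hs : s ∈ Icc (0:ℝ) 1) (ht : t ∈ Icc (0:ℝ) 1) (hc : c ∈ Icc (0:ℝ) 1) (hd : d ∈ Icc (0:ℝ) 1)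
    (hn : X u v ∉ uIcc s t) : Av γ u s t v c d := fun x hx y hy h' =>
  hn ((S.uniq u v h x (uIcc_subset_Icc hs ht hx) y (uIcc_subset_Icc hc hd hy) h').1 ▸ hx)

theorem SData.av_r (S : SData G γ X e) {u v : V} {s t c d : ℝ} (h : G.Adj u v)
    (hs : s ∈ Icc (0:ℝ) 1) (ht : t ∈ Icc (0:ℝ) 1) (hc : c ∈ Icc (0:ℝ) 1) (hd : d ∈ Icc (0:ℝ) 1)
    (hn : X v u ∉ uIcc c d) : Av γ u s t v c d := fun x hx y hy h' =>
  hn ((S.uniq u v h x (uIcc_subset_Icc hs ht hx) y (uIcc_subset_Icc hc hd hy) h').2 ▸ hy)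

theorem SData.av_self (S : SData G γ X e) {u : V} {s t c d : ℝ}
    (hs : s ∈ Icc (0:ℝ) 1) (ht : t ∈ Icc (0:ℝ) 1) (hc : c ∈ Icc (0:ℝ) 1) (hd : d ∈ Icc (0:ℝ) 1)
    (hn : ∀ x ∈ uIcc s t, x ∉ uIcc c d) : Av γ u s t u c d := fun x hx y hy h' =>
  hn x hx (((γ u).injOn (uIcc_subset_Icc hs ht hx) (uIcc_subset_Icc hc hd hy) h') ▸ hy)

theorem SData.bdeg_ne (S : SData G γ X e) {u v : V} {s t c d : ℝ} (h : G.Adj u v)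
    (hs : s ∈ Icc (0:ℝ) 1) (ht : t ∈ Icc (0:ℝ) 1) (hc : c ∈ Icc (0:ℝ) 1) (hd : d ∈ Icc (0:ℝ) 1)
    (h1 : SBt s t (X u v)) (h2 : SBt c d (X v u)) :
    bdeg (fun x y => cc ((γ u).toFun x) - cc ((γ v).toFun y)) s t c d ≠ 0 :=
  cross_ne (S.cross u v h) (S.hXI h) (S.hXI h.symm) rfl (S.meet u v h).symm
    (S.uniq u v h) hs ht hc hd h1 h2

def VL (γ : V → Arc) (u : Fin 4 → V) (s t : Fin 4 → ℝ)
    (hs : ∀ i, s i ∈ Icc (0:ℝ) 1) (ht : ∀ i, t i ∈ Icc (0:ℝ) 1)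
    (hcl : ∀ i, (γ (u i)).toFun (t i) = (γ (u (i+1))).toFun (s (i+1))) : ALoop :=
  ⟨fun i => γ (u i), s, t, hs, ht, hcl⟩

/-- bundled loop made of pieces of arcs of the family -/
structure PL (γ : V → Arc) where
  u : Fin 4 → V
  s : Fin 4 → ℝ
  t : Fin 4 → ℝ
  hs : ∀ i, s i ∈ Icc (0:ℝ) 1
  ht : ∀ i, t i ∈ Icc (0:ℝ) 1
  hcl : ∀ i, (γ (u i)).toFun (t i) = (γ (u (i+1))).toFun (s (i+1))

noncomputable def PL.W (P : PL γ) (z : ℝ × ℝ) : ℂ := (VL γ P.u P.s P.t P.hs P.ht P.hcl).W z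

theorem PL.path (P : PL γ) {v : V} {c d : ℝ} (hc : c ∈ Icc (0:ℝ) 1) (hd : d ∈ Icc (0:ℝ) 1)
    (h : ∀ i, Av γ (P.u i) (P.s i) (P.t i) v c d) :
    P.W ((γ v).toFun c) = P.W ((γ v).toFun d) :=
  (VL γ P.u P.s P.t P.hs P.ht P.hcl).W_path
    ((γ v).contOn.mono (uIcc_subset_Icc hc hd)) h

theorem PL.crs (S : SData G γ X e) (P : PL γ) (k : Fin 4) {v : V} {c d : ℝ}
    (hc : c ∈ Icc (0:ℝ) 1) (hd : d ∈ Icc (0:ℝ) 1)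
    (h : ∀ i, i ≠ k → Av γ (P.u i) (P.s i) (P.t i) v c d) (hk : G.Adj (P.u k) v)
    (h1 : SBt (P.s k) (P.t k) (X (P.u k) v)) (h2 : SBt c d (X v (P.u k))) :
    P.W ((γ v).toFun c) ≠ P.W ((γ v).toFun d) :=
  (VL γ P.u P.s P.t P.hs P.ht P.hcl).W_cross k
    ((γ v).contOn.mono (uIcc_subset_Icc hc hd)) h (S.bdeg_ne hk (P.hs k) (P.ht k) hc hd h1 h2)

theorem PL.outer (S : SData G γ X e) (P : PL γ) {v : V}
    (h : ∀ i, Av γ (P.u i) (P.s i) (P.t i) v (e v) (e v)) :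
    P.W ((γ v).toFun (e v)) = 0 := by
  apply (VL γ P.u P.s P.t P.hs P.ht P.hcl).W_outer γ _ (S.out v)
  · rintro hz
    obtain ⟨i, x, hx, hx'⟩ := mem_iUnion.1 hz
    exact h i x hx (e v) (by simp) hx'
  · intro z hz
    obtain ⟨i, x, hx, hx'⟩ := mem_iUnion.1 hz
    exact mem_iUnion.2 ⟨P.u i, x, uIcc_subset_Icc (P.hs i) (P.ht i) hx, hx'⟩

theorem SData.out0 (S : SData G γ X e) (P : PL γ) {v : V} {s : ℝ} (hs : s ∈ Icc (0:ℝ) 1)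
    (h : ∀ i, Av γ (P.u i) (P.s i) (P.t i) v (e v) s) : P.W ((γ v).toFun s) = 0 := by
  rw [← P.path (S.heI v) hs h]
  exact P.outer S fun i x hx y hy => h i x hx y (by
    rw [uIcc_self] at hy; rw [hy]; exact left_mem_uIcc)

structure Conf (G : SimpleGraph V) (X : V → V → ℝ) (c a b v3 v4 v5 w3 w4 : V) : Prop where
  ca : G.Adj c a
  cb : G.Adj c b
  c3 : G.Adj c v3
  c4 : G.Adj c v4
  c5 : G.Adj c v5
  ab : G.Adj a b
  h34 : G.Adj v3 v4
  h45 : G.Adj v4 v5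
  w33 : G.Adj w3 v3
  w34 : G.Adj w3 v4
  w44 : G.Adj w4 v4
  w45 : G.Adj w4 v5
  n3a : NA G v3 a
  n3b : NA G v3 b
  n4a : NA G v4 a
  n4b : NA G v4 b
  n5a : NA G v5 a
  n5b : NA G v5 b
  n3c : NA G w3 c
  m3a : NA G w3 a
  m3b : NA G w3 b
  n4c : NA G w4 c
  m4a : NA G w4 a
  m4b : NA G w4 b
  n35 : NA G w3 v5
  n43 : NA G w4 v3
  v35 : NA G v3 v5
  ww : w3 ≠ w4
  ord : (X c a < X c v3 ∧ X c v3 < X c v4 ∧ X c v4 < X c v5 ∧ X c v5 < X c b) ∨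
    (X c b < X c v5 ∧ X c v5 < X c v4 ∧ X c v4 < X c v3 ∧ X c v3 < X c a)
  nc1 : SBt (X v4 v5) (X v4 w4) (X v4 c) ↔ SBt (X v4 v5) (X v4 w4) (X v4 w3)
  nc2 : SBt (X v4 v3) (X v4 w3) (X v4 c) ↔ SBt (X v4 v3) (X v4 w3) (X v4 w4)

theorem Conf.mirror {c a b v3 v4 v5 w3 w4 : V} (C : Conf G X c a b v3 v4 v5 w3 w4) :
    Conf G X c b a v5 v4 v3 w4 w3 where
  ca := C.cb
  cb := C.ca
  c3 := C.c5
  c4 := C.c4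
  c5 := C.c3
  ab := C.ab.symm
  h34 := C.h45.symm
  h45 := C.h34.symm
  w33 := C.w45
  w34 := C.w44
  w44 := C.w34
  w45 := C.w33
  n3a := C.n5b
  n3b := C.n5a
  n4a := C.n4b
  n4b := C.n4a
  n5a := C.n3b
  n5b := C.n3a
  n3c := C.n4c
  m3a := C.m4b
  m3b := C.m4a
  n4c := C.n3c
  m4a := C.m3b
  m4b := C.m3a
  n35 := C.n43
  n43 := C.n35
  v35 := C.v35.symm
  ww := C.ww.symm
  ord := C.ord.symm
  nc1 := C.nc2
  nc2 := C.nc1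

theorem fin4 {P : Fin 4 → Prop} (h0 : P 0) (h1 : P 1) (h2 : P 2) (h3 : P 3) (i : Fin 4) : P i := by
  fin_cases i <;> assumption

theorem exJ (S : SData G γ X e) {c a b : V} (ca : G.Adj c a) (cb : G.Adj c b) (ab : G.Adj a b) :
    ∃ P : PL γ, P.u = ![c, b, a, a] ∧ P.s = ![X c a, X b c, X a b, X a c] ∧
      P.t = ![X c b, X b a, X a c, X a c] := by
  refine ⟨⟨_, _, _, ?_, ?_, ?_⟩, rfl, rfl, rfl⟩
  · exact fin4 (S.hXI ca) (S.hXI cb.symm) (S.hXI ab) (S.hXI ca.symm)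
  · exact fin4 (S.hXI cb) (S.hXI ab.symm) (S.hXI ca.symm) (S.hXI ca.symm)
  · exact fin4 (S.meet _ _ cb) (S.meet _ _ ab.symm) rfl (S.meet _ _ ca.symm)

theorem exK (S : SData G γ X e) {c v4 w3 v3 : V} (c4 : G.Adj c v4) (c3 : G.Adj c v3)
    (w4 : G.Adj w3 v4) (w33 : G.Adj w3 v3) :
    ∃ P : PL γ, P.u = ![c, v4, w3, v3] ∧ P.s = ![X c v3, X v4 c, X w3 v4, X v3 w3] ∧
      P.t = ![X c v4, X v4 w3, X w3 v3, X v3 c] := by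
  refine ⟨⟨_, _, _, ?_, ?_, ?_⟩, rfl, rfl, rfl⟩
  · exact fin4 (S.hXI c3) (S.hXI c4.symm) (S.hXI w4) (S.hXI w33.symm)
  · exact fin4 (S.hXI c4) (S.hXI w4.symm) (S.hXI w33) (S.hXI c3.symm)
  · exact fin4 (S.meet _ _ c4) (S.meet _ _ w4.symm) (S.meet _ _ w33) (S.meet _ _ c3.symm)

theorem not_uIcc_lt {x y z : ℝ} (h : (z < x ∧ z < y) ∨ (x < z ∧ y < z)) : z ∉ uIcc x y := by
  rw [mem_uIcc]; rintro (h'|h') <;> rcases h with h | h <;> linarith [h.1, h.2, h'.1, h'.2]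

theorem exW (S : SData G γ X e) {c a b v3 v4 v5 w3 w4 : V}
    (C : Conf G X c a b v3 v4 v5 w3 w4) :
    ∃ W : ℝ × ℝ → ℂ,
      (∀ v, G.Adj c v → NA G v a → NA G v b → SBt (X c a) (X c b) (X c v) →
        (∀ s ∈ Icc (0:ℝ) 1, SBt (e v) s (X v c) → W ((γ v).toFun s) ≠ 0) ∧
        (∀ s ∈ Icc (0:ℝ) 1, X v c ∉ uIcc (e v) s → W ((γ v).toFun s) = 0)) ∧
      (∀ w, NA G w c → NA G w a → NA G w b → ∀ s ∈ Icc (0:ℝ) 1, W ((γ w).toFun s) = 0) := by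
  obtain ⟨P, hu, hs, ht⟩ := exJ S C.ca C.cb C.ab
  have I1 := S.hXI C.ca
  have I2 := S.hXI C.ca.symm
  have I3 := S.hXI C.cb
  have I4 := S.hXI C.cb.symm
  have I5 := S.hXI C.ab
  have I6 := S.hXI C.ab.symm
  refine ⟨P.W, ?_, ?_⟩
  · intro v cv va vb hv
    have key : ∀ s ∈ Icc (0:ℝ) 1, X v c ∉ uIcc (e v) s → P.W ((γ v).toFun s) = 0 := by
      intro s h1 h2
      apply S.out0 P h1
      rw [hu, hs, ht]
      exact fin4 (S.av_r cv I1 I3 (S.heI v) h1 h2) (S.av_na vb.symm I4 I6 (S.heI v) h1)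
        (S.av_na va.symm I5 I2 (S.heI v) h1) (S.av_na va.symm I2 I2 (S.heI v) h1)
    refine ⟨?_, key⟩
    intro s h1 h2
    have h3 := key (e v) (S.heI v) (by
      rw [uIcc_self]; intro h; rw [mem_singleton_iff] at h; rw [h] at h2
      rcases h2 with h2 | h2 <;> linarith [h2.1, h2.2])
    rw [← h3]
    refine (P.crs S 0 (S.heI v) h1 ?_ ?_ ?_ ?_).symm
    · rw [hu, hs, ht]
      refine fin4 (fun h => absurd rfl h) (fun _ => S.av_na vb.symm I4 I6 (S.heI v) h1)
        (fun _ => S.av_na va.symm I5 I2 (S.heI v) h1) (fun _ => S.av_na va.symm I2 I2 (S.heI v) h1)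
    · rw [hu]; exact cv
    · rw [hu, hs, ht]; exact hv
    · rw [hu]; exact h2
  · intro w wc wa wb s h1
    apply S.out0 P h1
    rw [hu, hs, ht]
    exact fin4 (S.av_na wc.symm I1 I3 (S.heI w) h1) (S.av_na wb.symm I4 I6 (S.heI w) h1)
        (S.av_na wa.symm I5 I2 (S.heI w) h1) (S.av_na wa.symm I2 I2 (S.heI w) h1)

theorem order_half {x e c w3 w4 : ℝ} (he : e = 0 ∨ e = 1) (hc : c ∈ Ioo (0:ℝ) 1)
    (hw3 : w3 ∈ Ioo (0:ℝ) 1) (hw4 : w4 ∈ Ioo (0:ℝ) 1) (hx : x ∈ Ioo (0:ℝ) 1)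
    (h3 : ¬ SBt e w3 c) (h4 : ¬ SBt e w4 c) (c3 : c ≠ w3) (c4 : c ≠ w4) (xc : x ≠ c) (x3 : x ≠ w3)
    (x4 : x ≠ w4)
    (nc : SBt x w4 c ↔ SBt x w4 w3) (near : SBt c w3 w4) : SBt c w3 x ∧ c ∉ uIcc e x := by
  simp only [mem_Ioo, SBt, mem_uIcc] at *
  rcases he with rfl | rfl <;> grind

theorem core_half (S : SData G γ X e) {c a b v3 v4 v5 w3 w4 : V}
    (C : Conf G X c a b v3 v4 v5 w3 w4) (near : SBt (X v4 c) (X v4 w3) (X v4 w4)) : False := by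
  obtain ⟨W, hW1, hW2⟩ := exW S C
  have o4 : SBt (X c a) (X c b) (X c v4) := by
    rcases C.ord with h | h
    · exact Or.inl ⟨by linarith [h.1, h.2.1], by linarith [h.2.2.1, h.2.2.2]⟩
    · exact Or.inr ⟨by linarith [h.1, h.2.1], by linarith [h.2.2.1, h.2.2.2]⟩
  have o5 : SBt (X c a) (X c b) (X c v5) := by
    rcases C.ord with h | h
    · exact Or.inl ⟨by linarith [h.1, h.2.1], by linarith [h.2.2.1, h.2.2.2]⟩
    · exact Or.inr ⟨by linarith [h.1, h.2.1], by linarith [h.2.2.1, h.2.2.2]⟩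
  obtain ⟨A4, B4⟩ := hW1 v4 C.c4 C.n4a C.n4b o4
  obtain ⟨A5, B5⟩ := hW1 v5 C.c5 C.n5a C.n5b o5
  have h3 : ¬ SBt (e v4) (X v4 w3) (X v4 c) := by
    intro h
    apply A4 _ (S.hXI C.w34.symm) h
    rw [S.meet _ _ C.w34.symm]
    exact hW2 w3 C.n3c C.m3a C.m3b _ (S.hXI C.w34)
  have h4 : ¬ SBt (e v4) (X v4 w4) (X v4 c) := by
    intro h
    apply A4 _ (S.hXI C.w44.symm) h
    rw [S.meet _ _ C.w44.symm]
    exact hW2 w4 C.n4c C.m4a C.m4b _ (S.hXI C.w44)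
  have v5c : v5 ≠ c := C.c5.ne'
  obtain ⟨hx1, hx2⟩ := order_half (S.he v4) (S.hX _ _ C.c4.symm) (S.hX _ _ C.w34.symm)
    (S.hX _ _ C.w44.symm) (S.hX _ _ C.h45) h3 h4 (S.inj _ _ _ C.c4.symm C.w34.symm C.n3c.1.symm)
    (S.inj _ _ _ C.c4.symm C.w44.symm C.n4c.1.symm) (S.inj _ _ _ C.h45 C.c4.symm v5c)
    (S.inj _ _ _ C.h45 C.w34.symm C.n35.1.symm) (S.inj _ _ _ C.h45 C.w44.symm C.w45.ne')
    C.nc1 near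
  have h5 : ¬ SBt (e v5) (X v5 v4) (X v5 c) := by
    intro h
    apply A5 _ (S.hXI C.h45.symm) h
    rw [S.meet _ _ C.h45.symm]
    exact B4 _ (S.hXI C.h45) hx2
  have h5' : SBt (e v5) (X v5 c) (X v5 v4) := by
    have i1 := S.hX _ _ C.c5.symm
    have i2 := S.hX _ _ C.h45.symm
    have i3 := S.inj _ _ _ C.c5.symm C.h45.symm C.c4.ne
    have i4 := S.he v5
    simp only [mem_Ioo, SBt] at *
    rcases i4 with i4 | i4 <;> rw [i4] at h5 ⊢ <;> grind
  obtain ⟨P, hu, hs, ht⟩ := exK S C.c4 C.c3 C.w34 C.w33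
  have I1 := S.hXI C.c3
  have I2 := S.hXI C.c4.symm
  have I3 := S.hXI C.w34
  have I4 := S.hXI C.w33.symm
  have J1 := S.hXI C.c4
  have J2 := S.hXI C.w34.symm
  have J3 := S.hXI C.w33
  have J4 := S.hXI C.c3.symm
  have E5 := S.heI v5
  have Q5 := S.hXI C.c5.symm
  have n1 : X c v5 ∉ uIcc (X c v3) (X c v4) := by
    apply not_uIcc_lt
    rcases C.ord with h | h
    · right; constructor <;> linarith [h.1, h.2.1, h.2.2.1, h.2.2.2]
    · left; constructor <;> linarith [h.1, h.2.1, h.2.2.1, h.2.2.2]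
  have n2 : X c b ∉ uIcc (X c v3) (X c v4) := by
    apply not_uIcc_lt
    rcases C.ord with h | h
    · right; constructor <;> linarith [h.1, h.2.1, h.2.2.1, h.2.2.2]
    · left; constructor <;> linarith [h.1, h.2.1, h.2.2.1, h.2.2.2]
  have n3 : X c v3 ∉ uIcc (X c b) (X c v5) := by
    apply not_uIcc_lt
    rcases C.ord with h | h
    · left; constructor <;> linarith [h.1, h.2.1, h.2.2.1, h.2.2.2]
    · right; constructor <;> linarith [h.1, h.2.1, h.2.2.1, h.2.2.2]
  have n4 : X c v4 ∉ uIcc (X c b) (X c v5) := by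
    apply not_uIcc_lt
    rcases C.ord with h | h
    · left; constructor <;> linarith [h.1, h.2.1, h.2.2.1, h.2.2.2]
    · right; constructor <;> linarith [h.1, h.2.1, h.2.2.1, h.2.2.2]
  have f1 : P.W ((γ v5).toFun (e v5)) = 0 := by
    apply P.outer S
    rw [hu, hs, ht]
    refine fin4 (S.av_l C.c5 I1 J1 E5 E5 n1) (S.av_r C.h45 I2 J2 E5 E5 ?_)
      (S.av_na C.n35 I3 J3 E5 E5) (S.av_na C.v35 I4 J4 E5 E5)
    rw [uIcc_self]; intro h; rw [mem_singleton_iff] at h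
    change X v5 v4 = e v5 at h
    have := S.hX _ _ C.h45.symm
    rcases S.he v5 with h' | h' <;> rw [h, h'] at this <;> simp at this
  have f2 : P.W ((γ v5).toFun (e v5)) ≠ P.W ((γ v5).toFun (X v5 c)) := by
    refine P.crs S 1 E5 Q5 ?_ ?_ ?_ ?_
    · rw [hu, hs, ht]
      exact fin4 (fun _ => S.av_l C.c5 I1 J1 E5 Q5 n1) (fun h => absurd rfl h)
        (fun _ => S.av_na C.n35 I3 J3 E5 Q5) (fun _ => S.av_na C.v35 I4 J4 E5 Q5)
    · rw [hu]; exact C.h45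
    · rw [hu, hs, ht]; exact hx1
    · rw [hu]; exact h5'
  have f3 : P.W ((γ c).toFun (X c b)) = P.W ((γ c).toFun (X c v5)) := by
    refine P.path (S.hXI C.cb) (S.hXI C.c5) ?_
    rw [hu, hs, ht]
    refine fin4 (S.av_self I1 J1 (S.hXI C.cb) (S.hXI C.c5) ?_)
      (S.av_r C.c4.symm I2 J2 (S.hXI C.cb) (S.hXI C.c5) n4)
      (S.av_na C.n3c I3 J3 (S.hXI C.cb) (S.hXI C.c5))
      (S.av_r C.c3.symm I4 J4 (S.hXI C.cb) (S.hXI C.c5) n3)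
    intro x hx hx'
    change x ∈ uIcc (X c v3) (X c v4) at hx
    rw [mem_uIcc] at hx hx'
    rcases C.ord with h | h <;> rcases hx with hx | hx <;> rcases hx' with hx' | hx' <;>
      linarith [h.1, h.2.1, h.2.2.1, h.2.2.2, hx.1, hx.2, hx'.1, hx'.2]
  have f4 : P.W ((γ b).toFun (X b c)) = 0 := by
    have Eb := S.heI b
    have Qb := S.hXI C.cb.symm
    apply S.out0 P Qb
    rw [hu, hs, ht]
    exact fin4 (S.av_l C.cb I1 J1 Eb Qb n2) (S.av_na C.n4b I2 J2 Eb Qb)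
      (S.av_na C.m3b I3 J3 Eb Qb) (S.av_na C.n3b I4 J4 Eb Qb)
  rw [← S.meet _ _ C.c5, ← f3, S.meet _ _ C.cb, f4, f1] at f2
  exact f2 rfl

theorem core (S : SData G γ X e) {c a b v3 v4 v5 w3 w4 : V}
    (C : Conf G X c a b v3 v4 v5 w3 w4) : False := by
  obtain ⟨W, hW1, hW2⟩ := exW S C
  have o4 : SBt (X c a) (X c b) (X c v4) := by
    rcases C.ord with h | h
    · exact Or.inl ⟨by linarith [h.1, h.2.1], by linarith [h.2.2.1, h.2.2.2]⟩
    · exact Or.inr ⟨by linarith [h.1, h.2.1], by linarith [h.2.2.1, h.2.2.2]⟩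
  obtain ⟨A4, B4⟩ := hW1 v4 C.c4 C.n4a C.n4b o4
  have h3 : ¬ SBt (e v4) (X v4 w3) (X v4 c) := by
    intro h
    apply A4 _ (S.hXI C.w34.symm) h
    rw [S.meet _ _ C.w34.symm]
    exact hW2 w3 C.n3c C.m3a C.m3b _ (S.hXI C.w34)
  have h4 : ¬ SBt (e v4) (X v4 w4) (X v4 c) := by
    intro h
    apply A4 _ (S.hXI C.w44.symm) h
    rw [S.meet _ _ C.w44.symm]
    exact hW2 w4 C.n4c C.m4a C.m4b _ (S.hXI C.w44)
  have d1 := S.inj _ _ _ C.c4.symm C.w34.symm C.n3c.1.symm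
  have d2 := S.inj _ _ _ C.c4.symm C.w44.symm C.n4c.1.symm
  have d3 := S.inj _ _ _ C.w34.symm C.w44.symm C.ww
  have i1 := S.hX _ _ C.c4.symm
  have i2 := S.hX _ _ C.w34.symm
  have i3 := S.hX _ _ C.w44.symm
  have : SBt (X v4 c) (X v4 w3) (X v4 w4) ∨ SBt (X v4 c) (X v4 w4) (X v4 w3) := by
    simp only [mem_Ioo, SBt] at *
    rcases S.he v4 with i4 | i4 <;> rw [i4] at h3 h4 <;> grind
  rcases this with h | h
  · exact core_half S C h
  · exact core_half S C.mirror h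

end core


theorem exSData {V : Type} {G : SimpleGraph V} (R : OneStringRep G)
    (ho : ∀ v, (R.γ v).toFun 0 ∈ closure (contour R.γ) ∨
      (R.γ v).toFun 1 ∈ closure (contour R.γ)) :
    ∃ (X : V → V → ℝ) (e : V → ℝ), SData G R.γ X e := by
  have h1 : ∀ u v, ∃ s : ℝ, G.Adj u v → s ∈ Ioo (0:ℝ) 1 ∧ (R.γ u).toFun s ∈ (R.γ v).img := by
    intro u v
    by_cases h : G.Adj u v
    · obtain ⟨q, hq⟩ := R.adj_inter u v h
      have hq' : q ∈ (R.γ u).img ∩ (R.γ v).img := by rw [hq]; rfl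
      obtain ⟨⟨s, hs, hs'⟩, _⟩ := R.proper u v h.ne q hq'
      exact ⟨s, fun _ => ⟨hs, hs' ▸ hq'.2⟩⟩
    · exact ⟨0, fun h' => absurd h' h⟩
  choose X hX using h1
  have h2 : ∀ v, ∃ s : ℝ, (s = 0 ∨ s = 1) ∧ (R.γ v).toFun s ∈ closure (contour R.γ) := by
    intro v
    rcases ho v with h | h
    · exact ⟨0, Or.inl rfl, h⟩
    · exact ⟨1, Or.inr rfl, h⟩
  choose e he using h2
  have hu : ∀ u v, G.Adj u v → ∀ s ∈ Icc (0:ℝ) 1, (R.γ u).toFun s ∈ (R.γ v).img → s = X u v := by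
    intro u v h s hs hs'
    obtain ⟨q, hq⟩ := R.adj_inter u v h
    obtain ⟨h1, h2⟩ := hX u v h
    have e1 : (R.γ u).toFun s = q := by
      have : (R.γ u).toFun s ∈ (R.γ u).img ∩ (R.γ v).img := ⟨⟨s, hs, rfl⟩, hs'⟩
      rw [hq] at this; exact this
    have e2 : (R.γ u).toFun (X u v) = q := by
      have : (R.γ u).toFun (X u v) ∈ (R.γ u).img ∩ (R.γ v).img :=
        ⟨⟨_, Ioo_subset_Icc_self h1, rfl⟩, h2⟩
      rw [hq] at this; exact this
    exact (R.γ u).injOn hs (Ioo_subset_Icc_self h1) (e1.trans e2.symm)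
  have hun : ∀ u v, G.Adj u v → ∀ s ∈ Icc (0:ℝ) 1, ∀ t ∈ Icc (0:ℝ) 1,
      (R.γ u).toFun s = (R.γ v).toFun t → s = X u v ∧ t = X v u := by
    intro u v h s hs t ht hst
    exact ⟨hu u v h s hs ⟨t, ht, hst.symm⟩, hu v u h.symm t ht ⟨s, hs, hst⟩⟩
  refine ⟨X, e, ⟨fun u v h => (hX u v h).1, ?_, hun, ?_, ?_, ?_, fun v => (he v).1,
    fun v => (he v).2⟩⟩
  · intro u v h
    obtain ⟨t, ht, ht'⟩ := (hX u v h).2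
    rw [← (hun u v h _ (Ioo_subset_Icc_self (hX u v h).1) t ht ht'.symm).2, ht']
  · intro u v huv h s hs t ht hst
    have : (R.γ u).toFun s ∈ (R.γ u).img ∩ (R.γ v).img := ⟨⟨s, hs, rfl⟩, ⟨t, ht, hst.symm⟩⟩
    rw [R.nonadj_disjoint u v huv h] at this
    exact this
  · intro u v h
    exact R.proper u v h.ne _ ⟨⟨_, Ioo_subset_Icc_self (hX u v h).1, rfl⟩, (hX u v h).2⟩
  · intro u v w hv hw hvw hh
    have : (R.γ u).toFun (X u v) ∈ (R.γ u).img ∩ (R.γ v).img ∩ (R.γ w).img :=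
      ⟨⟨⟨_, Ioo_subset_Icc_self (hX u v hv).1, rfl⟩, (hX u v hv).2⟩, by
        rw [hh]; exact (hX u w hw).2⟩
    rw [R.no_triple u v w hv.ne hw.ne hvw] at this
    exact this

theorem pw_tri {V : Type} {r : V → V → Prop} {l : List V} (h : l.Pairwise r) {u v : V}
    (hu : u ∈ l) (hv : v ∈ l) (huv : u ≠ v) : r u v ∨ r v u := by
  induction h with
  | nil => simp at hu
  | cons h1 h2 ih =>
    rcases List.mem_cons.1 hu with rfl | ku <;> rcases List.mem_cons.1 hv with rfl | kv
    · exact absurd rfl huv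
    · exact Or.inl (h1 _ kv)
    · exact Or.inr (h1 _ ku)
    · exact ih ku kv

theorem rot_lt {V : Type} {A B : List V} {θ t : V → ℝ} 
    (h1 : (A ++ B).Pairwise (fun x y => θ x < θ y)) (h2 : (B ++ A).Pairwise (fun x y => t x < t y))
    (hd : ∀ x ∈ A, x ∉ B) {x y : V} (hx : x ∈ A ++ B) (hy : y ∈ A ++ B) (hxy : x ≠ y) :
    θ x ≠ θ y ∧ t x ≠ t y ∧ (t x < t y ↔ (θ x < θ y ↔ (x ∈ B ↔ y ∈ B))) := by
  rw [List.pairwise_append] at h1 h2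
  obtain ⟨a1, a2, a3⟩ := h1
  obtain ⟨b1, b2, b3⟩ := h2
  rcases List.mem_append.1 hx with x1 | x1 <;> rcases List.mem_append.1 hy with y1 | y1
  · have := pw_tri ((a1.and b2)) x1 y1 hxy
    have := hd x x1
    have := hd y y1
    grind
  · have := a3 x x1 y y1
    have := b3 y y1 x x1
    have := hd x x1
    grind
  · have := a3 y y1 x x1
    have := b3 x x1 y y1
    have := hd y y1
    grind
  · have := pw_tri ((a2.and b1)) x1 y1 hxy
    grind

theorem SBt_key (a b c : ℝ) (h1 : a ≠ c) (h2 : b ≠ c) : SBt a b c ↔ ¬ (a < c ↔ b < c) := by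
  unfold SBt
  rcases lt_or_gt_of_ne h1 with h1 | h1 <;> rcases lt_or_gt_of_ne h2 with h2 | h2 <;>
    simp [h1, h2, h1.le, h2.le, not_lt.2 h1.le, not_lt.2 h2.le]

theorem bool8 (q1 q2 q3 q4 a b c d : Prop) (h : ¬ (q1 ↔ q2) ↔ ¬ (q3 ↔ q4)) :
    (¬ ((q1 ↔ (a ↔ c)) ↔ (q2 ↔ (b ↔ c)))) ↔ (¬ ((q3 ↔ (a ↔ d)) ↔ (q4 ↔ (b ↔ d)))) := by
  by_cases q1 <;> by_cases q2 <;> by_cases q3 <;> by_cases q4 <;> by_cases a <;> by_cases b <;> by_cases c <;> by_cases d <;>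
    simp_all

theorem rot_SBt {V : Type} {l : List V} {θ t : V → ℝ} (r : ℕ) (hn : l.Nodup)
    (h1 : l.Pairwise (fun x y => θ x < θ y)) (h2 : (l.rotate r).Pairwise (fun x y => t x < t y))
    {x y z w : V} (hx : x ∈ l) (hy : y ∈ l) (hz : z ∈ l) (hw : w ∈ l) (xz : x ≠ z)
    (yz : y ≠ z) (xw : x ≠ w) (yw : y ≠ w)
    (h : SBt (θ x) (θ y) (θ z) ↔ SBt (θ x) (θ y) (θ w)) :
    SBt (t x) (t y) (t z) ↔ SBt (t x) (t y) (t w) := by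
  obtain ⟨A, B, hl, hr⟩ : ∃ A B, l = A ++ B ∧ l.rotate r = B ++ A :=
    ⟨l.take (r % l.length), l.drop (r % l.length), by simp, by
      rw [List.rotate_eq_drop_append_take_mod]⟩
  rw [hr] at h2
  subst hl
  have hd : ∀ x ∈ A, x ∉ B := fun x hA hB => (List.nodup_append.1 hn).2.2 x hA x hB rfl
  have a1 := rot_lt h1 h2 hd hx hz xz
  have a2 := rot_lt h1 h2 hd hy hz yz
  have a3 := rot_lt h1 h2 hd hx hw xw
  have a4 := rot_lt h1 h2 hd hy hw yw
  rw [SBt_key _ _ _ a1.1 a2.1, SBt_key _ _ _ a3.1 a4.1] at h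
  rw [SBt_key _ _ _ a1.2.1 a2.2.1, SBt_key _ _ _ a3.2.1 a4.2.1, a1.2.2, a2.2.2, a3.2.2, a4.2.2]
  exact bool8 _ _ _ _ _ _ _ _ h

theorem order_transfer {V : Type} {G : SimpleGraph V} {p : V → ℝ × ℝ} {R : OneStringRep G}
    {X : V → V → ℝ} {e : V → ℝ} (S : SData G R.γ X e) (hO : OrderPreserving G p R) {v x y z w : V}
    (hx : G.Adj v x) (hy : G.Adj v y) (hz : G.Adj v z) (hw : G.Adj v w) (xz : x ≠ z)
    (yz : y ≠ z) (xw : x ≠ w) (yw : y ≠ w)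
    (h : SBt (angleAt (p v) (p x)) (angleAt (p v) (p y)) (angleAt (p v) (p z)) ↔
      SBt (angleAt (p v) (p x)) (angleAt (p v) (p y)) (angleAt (p v) (p w))) :
    SBt (X v x) (X v y) (X v z) ↔ SBt (X v x) (X v y) (X v w) := by
  obtain ⟨l, hn, hl, hs, r, dir, t, ht, hr⟩ := hO v
  have htX : ∀ u, G.Adj v u → t u = X v u := by
    intro u hu
    obtain ⟨h1, s, hs, hs'⟩ := ht u ((hl u).2 hu)
    exact (S.uniq v u hu _ h1 s hs hs'.symm).1
  rw [← htX x hx, ← htX y hy, ← htX z hz, ← htX w hw]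
  rw [← hl] at hx hy hz hw
  cases dir
  · have h2 : (l.rotate r).Pairwise (fun x y => (fun u => - t u) x < (fun u => - t u) y) :=
      hr.imp (by intro a b h; simpa using h)
    have := rot_SBt (θ := fun u => angleAt (p v) (p u)) r hn hs h2 hx hy hz hw xz yz xw yw h
    simpa only [SBt, neg_lt_neg_iff, and_comm, or_comm] using this
  · have h2 : (l.rotate r).Pairwise (fun x y => t x < t y) :=
      hr.imp (by intro a b h; simpa using h)
    exact rot_SBt (θ := fun u => angleAt (p v) (p u)) r hn hs h2 hx hy hz hw xz yz xw yw h


/-- cross product of `a - o` and `b - o` -/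
def cr (o a b : ℝ × ℝ) : ℝ := (a.1 - o.1) * (b.2 - o.2) - (a.2 - o.2) * (b.1 - o.1)

theorem cr_sin (o a b : ℝ × ℝ) : ∃ r s : ℝ, 0 ≤ r ∧ 0 ≤ s ∧ (a ≠ o → 0 < r) ∧ (b ≠ o → 0 < s) ∧
    a.1 - o.1 = r * Real.cos (angleAt o a) ∧ a.2 - o.2 = r * Real.sin (angleAt o a) ∧
    b.1 - o.1 = s * Real.cos (angleAt o b) ∧ b.2 - o.2 = s * Real.sin (angleAt o b) ∧
    cr o a b = r * s * Real.sin (angleAt o b - angleAt o a) := by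
  have key : ∀ a : ℝ × ℝ, ∃ r : ℝ, 0 ≤ r ∧ (a ≠ o → 0 < r) ∧
      a.1 - o.1 = r * Real.cos (angleAt o a) ∧ a.2 - o.2 = r * Real.sin (angleAt o a) := by
    intro a
    refine ⟨‖(⟨a.1 - o.1, a.2 - o.2⟩ : ℂ)‖, norm_nonneg _, ?_, ?_, ?_⟩
    · intro h
      rw [norm_pos_iff]
      intro h'
      apply h
      have h1 := congrArg Complex.re h'
      have h2 := congrArg Complex.im h'
      simp only [Complex.zero_re, Complex.zero_im] at h1 h2
      ext <;> linarith
    · unfold angleAt; rw [Complex.norm_mul_cos_arg]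
    · unfold angleAt; rw [Complex.norm_mul_sin_arg]
  obtain ⟨r, h1, h2, h3, h4⟩ := key a
  obtain ⟨s, g1, g2, g3, g4⟩ := key b
  refine ⟨r, s, h1, g1, h2, g2, h3, h4, g3, g4, ?_⟩
  unfold cr
  rw [h3, h4, g3, g4, Real.sin_sub]
  ring

theorem cr_sgn {o a b : ℝ × ℝ} (ha : a ≠ o) (hb : b ≠ o) :
    (0 < cr o a b ↔ 0 < Real.sin (angleAt o b - angleAt o a)) ∧
    (cr o a b < 0 ↔ Real.sin (angleAt o b - angleAt o a) < 0) := by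
  obtain ⟨r, s, _, _, hr, hs, _, _, _, _, h⟩ := cr_sin o a b
  rw [h]
  have : 0 < r * s := mul_pos (hr ha) (hs hb)
  exact ⟨by rw [mul_pos_iff_of_pos_left this], fun h => by by_contra h'; nlinarith,
    fun h => mul_neg_of_pos_of_neg this h⟩

theorem sin_sgn {d : ℝ} (h1 : -(2 * Real.pi) < d) (h2 : d < 2 * Real.pi) :
    (0 < Real.sin d ↔ ((0 < d ∧ d < Real.pi) ∨ d < -Real.pi)) ∧
    (Real.sin d < 0 ↔ ((-Real.pi < d ∧ d < 0) ∨ Real.pi < d)) := by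
  have A : ∀ d, 0 < d → d < Real.pi → 0 < Real.sin d := fun d h1 h2 =>
    Real.sin_pos_of_pos_of_lt_pi h1 h2
  have B : ∀ d, Real.pi < d → d < 2 * Real.pi → Real.sin d < 0 := fun d h1 h2 => by
    have := A (d - Real.pi) (by linarith) (by linarith)
    rw [Real.sin_sub_pi] at this; linarith
  have hpi := Real.pi_pos
  have Am : -Real.pi < d → d < 0 → Real.sin d < 0 := fun h1 h2 => by
    have := A (-d) (by linarith) (by linarith)
    rw [Real.sin_neg] at this; linarith
  have Bm : d < -Real.pi → 0 < Real.sin d := fun h => by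
    have := B (-d) (by linarith) (by linarith)
    rw [Real.sin_neg] at this; linarith
  rcases lt_trichotomy d (-Real.pi) with h | h | h
  · have := Bm h
    constructor <;> constructor <;> intro h' <;> grind
  · have : Real.sin d = 0 := by rw [h]; simp
    constructor <;> constructor <;> intro h' <;> grind
  rcases lt_trichotomy d 0 with g | g | g
  · have := Am h g
    constructor <;> constructor <;> intro h' <;> grind
  · have : Real.sin d = 0 := by rw [g]; simp
    constructor <;> constructor <;> intro h' <;> grind
  rcases lt_trichotomy d Real.pi with f | f | f
  · have := A d g f
    constructor <;> constructor <;> intro h' <;> grind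
  · have : Real.sin d = 0 := by rw [f]; simp
    constructor <;> constructor <;> intro h' <;> grind
  · have := B d f h2
    constructor <;> constructor <;> intro h' <;> grind

theorem ang_lin {π α β ζ : ℝ} (hπ : 0 < π) (a1 : -π < α) (a2 : α ≤ π) (b1 : -π < β) (b2 : β ≤ π)
    (c1 : -π < ζ) (c2 : ζ ≤ π) (n1 : ζ ≠ α) (n2 : ζ ≠ β)
    (P N : ℝ → Prop) (hP : ∀ d, P d ↔ ((0 < d ∧ d < π) ∨ d < -π))
    (hN : ∀ d, N d ↔ ((-π < d ∧ d < 0) ∨ π < d)) (hD : P (β - α) ∨ N (β - α)) :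
    (SBt α β ζ ↔ (((P (β - α) ∧ P (β - ζ) ∧ P (ζ - α)) ∨ (N (β - α) ∧ N (β - ζ) ∧ N (ζ - α)))
      ↔ (α - β < π ∧ β - α < π))) := by
  simp only [hP, hN] at *
  clear hP hN
  unfold SBt
  grind (splits := 30)


def InC (o x y z : ℝ × ℝ) : Prop := 0 < cr o z y * cr o x y ∧ 0 < cr o x z * cr o x y

theorem angle_cone {o x y z : ℝ × ℝ} (hx : x ≠ o) (hy : y ≠ o) (hz : z ≠ o)
    (hD : cr o x y ≠ 0) (n1 : angleAt o z ≠ angleAt o x) (n2 : angleAt o z ≠ angleAt o y) :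
    SBt (angleAt o x) (angleAt o y) (angleAt o z) ↔ (InC o x y z ↔
      (angleAt o x - angleAt o y < Real.pi ∧ angleAt o y - angleAt o x < Real.pi)) := by
  have bd : ∀ q, -Real.pi < angleAt o q ∧ angleAt o q ≤ Real.pi := fun q =>
    ⟨Complex.neg_pi_lt_arg _, Complex.arg_le_pi _⟩
  obtain ⟨a1, a2⟩ := bd x
  obtain ⟨b1, b2⟩ := bd y
  obtain ⟨c1, c2⟩ := bd z
  have sg : ∀ {a b}, a ≠ o → b ≠ o →
      (0 < cr o a b ↔ ((0 < angleAt o b - angleAt o a ∧ angleAt o b - angleAt o a < Real.pi) ∨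
        angleAt o b - angleAt o a < -Real.pi)) ∧
      (cr o a b < 0 ↔ ((-Real.pi < angleAt o b - angleAt o a ∧ angleAt o b - angleAt o a < 0) ∨
        Real.pi < angleAt o b - angleAt o a)) := by
    intro a b ha hb
    have h1 := bd a
    have h2 := bd b
    have h3 := cr_sgn ha hb
    have h4 := sin_sgn (d := angleAt o b - angleAt o a) (by linarith [h1.1, h1.2, h2.1, h2.2])
      (by linarith [h1.1, h1.2, h2.1, h2.2])
    exact ⟨h3.1.trans h4.1, h3.2.trans h4.2⟩
  have key := ang_lin Real.pi_pos a1 a2 b1 b2 c1 c2 n1 n2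
    (fun d => (0 < d ∧ d < Real.pi) ∨ d < -Real.pi) (fun d => (-Real.pi < d ∧ d < 0) ∨ Real.pi < d)
    (fun d => Iff.rfl) (fun d => Iff.rfl)
    (by
      rw [← (sg hx hy).1, ← (sg hx hy).2]
      exact (lt_or_gt_of_ne hD).symm)
  rw [key, ← (sg hx hy).1, ← (sg hx hy).2, ← (sg hx hz).1, ← (sg hx hz).2, ← (sg hz hy).1,
    ← (sg hz hy).2]
  have : InC o x y z ↔ (0 < cr o x y ∧ 0 < cr o z y ∧ 0 < cr o x z ∨
    cr o x y < 0 ∧ cr o z y < 0 ∧ cr o x z < 0) := by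
    unfold InC
    rw [mul_pos_iff, mul_pos_iff]
    rcases lt_or_gt_of_ne hD with h | h
    · simp only [h, h.not_gt, and_false, and_true, true_and, false_and, or_false, false_or]
    · simp only [h, h.not_gt, and_false, and_true, true_and, false_and, or_false, false_or]
  rw [this]

theorem seg_mem {o a q : ℝ × ℝ} (k : ℝ) (h0 : 0 ≤ k) (h1 : k ≤ 1)
    (e1 : q.1 - o.1 = k * (a.1 - o.1)) (e2 : q.2 - o.2 = k * (a.2 - o.2)) : q ∈ segment ℝ o a := by
  refine ⟨1 - k, k, by linarith, h0, by ring, ?_⟩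
  ext
  · simp; linarith
  · simp; linarith

section drawing
variable {V : Type} {G : SimpleGraph V} {p : V → ℝ × ℝ}

theorem angle_ne (hp : IsPlaneDrawing G p) {o x z : V} (ox : G.Adj o x) (oz : G.Adj o z)
    (xz : x ≠ z) : angleAt (p o) (p z) ≠ angleAt (p o) (p x) := by
  intro h
  obtain ⟨hi, _, _, h4⟩ := hp
  obtain ⟨r, s, _, _, hr, hs, e1, e2, e3, e4, _⟩ := cr_sin (p o) (p x) (p z)
  have hr := hr (fun h => ox.ne' (hi h))
  have hs := hs (fun h => oz.ne' (hi h))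
  rw [h] at e3 e4
  rcases le_total r s with hrs | hrs
  · apply h4 o z x oz ox.ne' xz
    refine seg_mem (r / s) (by positivity) (by rw [div_le_one hs]; exact hrs) ?_ ?_
    · rw [e1, e3]; field_simp
    · rw [e2, e4]; field_simp
  · apply h4 o x z ox oz.ne' xz.symm
    refine seg_mem (s / r) (by positivity) (by rw [div_le_one hr]; exact hrs) ?_ ?_
    · rw [e1, e3]; field_simp
    · rw [e2, e4]; field_simp

theorem cr_ne (hp : IsPlaneDrawing G p) {o x y : V} (ox : G.Adj o x) (oy : G.Adj o y)
    (xy : G.Adj x y) : cr (p o) (p x) (p y) ≠ 0 := by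
  intro h
  obtain ⟨hi, _, _, h4⟩ := hp
  have hxo : p x ≠ p o := fun h => ox.ne' (hi h)
  unfold cr at h
  obtain ⟨a1, ha1⟩ : ∃ a, a = (p x).1 - (p o).1 := ⟨_, rfl⟩
  obtain ⟨a2, ha2⟩ : ∃ a, a = (p x).2 - (p o).2 := ⟨_, rfl⟩
  obtain ⟨b1, hb1⟩ : ∃ a, a = (p y).1 - (p o).1 := ⟨_, rfl⟩
  obtain ⟨b2, hb2⟩ : ∃ a, a = (p y).2 - (p o).2 := ⟨_, rfl⟩
  rw [← ha1, ← ha2, ← hb1, ← hb2] at h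
  have hS : 0 < a1 ^ 2 + a2 ^ 2 := by
    by_contra hS
    apply hxo
    have h1 : a1 = 0 := by nlinarith [sq_nonneg a1, sq_nonneg a2]
    have h2 : a2 = 0 := by nlinarith [sq_nonneg a1, sq_nonneg a2]
    ext <;> linarith
  obtain ⟨t, ht⟩ : ∃ t, t = (a1 * b1 + a2 * b2) / (a1 ^ 2 + a2 ^ 2) := ⟨_, rfl⟩
  have e1 : b1 = t * a1 := by rw [ht]; field_simp; linear_combination (-a2) * h
  have e2 : b2 = t * a2 := by rw [ht]; field_simp; linear_combination a1 * h
  rcases lt_or_ge t 0 with h0 | h0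
  · apply h4 x y o xy ox.ne oy.ne
    have : 0 < 1 - t := by linarith
    refine seg_mem (1 / (1 - t)) (by positivity) (by rw [div_le_one this]; linarith) ?_ ?_
    · rw [show (p y).1 - (p x).1 = - (1 - t) * a1 by linarith,
        show (p o).1 - (p x).1 = - a1 by linarith]; field_simp
    · rw [show (p y).2 - (p x).2 = - (1 - t) * a2 by linarith,
        show (p o).2 - (p x).2 = - a2 by linarith]; field_simp
  rcases le_or_gt t 1 with h1 | h1
  · apply h4 o x y ox oy.ne' xy.ne'
    exact seg_mem t h0 h1 (by rw [← ha1, ← hb1, e1]) (by rw [← ha2, ← hb2, e2])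
  · apply h4 o y x oy ox.ne' xy.ne
    refine seg_mem (1 / t) (by positivity) (by rw [div_le_one (by linarith)]; linarith) ?_ ?_
    · rw [← ha1, ← hb1, e1]; field_simp
    · rw [← ha2, ← hb2, e2]; field_simp

def Tri (o x y z : ℝ × ℝ) : Prop := 0 < cr o z y * cr o x y ∧ 0 < cr o x z * cr o x y ∧
  cr o z y * cr o x y + cr o x z * cr o x y < cr o x y ^ 2

theorem cone_tri (hp : IsPlaneDrawing G p) {o x y z : V} (ox : G.Adj o x) (oy : G.Adj o y)
    (xy : G.Adj x y) (oz : G.Adj o z) (zx : z ≠ x) (zy : z ≠ y) :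
    InC (p o) (p x) (p y) (p z) ↔ Tri (p o) (p x) (p y) (p z) := by
  refine ⟨?_, fun h => ⟨h.1, h.2.1⟩⟩
  rintro ⟨h1, h2⟩
  refine ⟨h1, h2, ?_⟩
  by_contra h3
  have hD := cr_ne hp ox oy xy
  obtain ⟨hi, hh, _, h4⟩ := hp
  have hs := hh o z x y oz xy ox.ne oy.ne zx zy
  obtain ⟨D, hDD⟩ : ∃ D, D = cr (p o) (p x) (p y) := ⟨_, rfl⟩
  obtain ⟨l, hl⟩ : ∃ D, D = cr (p o) (p z) (p y) := ⟨_, rfl⟩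
  obtain ⟨m, hm⟩ : ∃ D, D = cr (p o) (p x) (p z) := ⟨_, rfl⟩
  rw [← hDD] at h1 h2 h3 hD
  rw [← hl] at h1 h3
  rw [← hm] at h2 h3
  have hD2 : 0 < D ^ 2 := by positivity
  have hp0 : 0 < l * D + m * D := by linarith
  have hk : 0 < (l + m) * D := by linarith
  have e1 : D * ((p z).1 - (p o).1) = l * ((p x).1 - (p o).1) + m * ((p y).1 - (p o).1) := by
    rw [hDD, hl, hm]; unfold cr; ring
  have e2 : D * ((p z).2 - (p o).2) = l * ((p x).2 - (p o).2) + m * ((p y).2 - (p o).2) := by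
    rw [hDD, hl, hm]; unfold cr; ring
  have hlm : l + m ≠ 0 := by rintro h; rw [h] at hk; simp at hk
  obtain ⟨k, hkk⟩ : ∃ k, k = D / (l + m) := ⟨_, rfl⟩
  have k1 : 0 ≤ k := by
    rw [hkk, show D / (l + m) = ((l + m) * D) / (l + m) ^ 2 by field_simp]; positivity
  have k2 : k ≤ 1 := by
    rw [hkk, show D / (l + m) = D ^ 2 / ((l + m) * D) by field_simp, div_le_one hk]; linarith
  obtain ⟨j, hj⟩ : ∃ j, j = m / (l + m) := ⟨_, rfl⟩
  have j1 : 0 ≤ j := by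
    rw [hj, show m / (l + m) = (m * D) / ((l + m) * D) by field_simp]; positivity
  have j2 : j ≤ 1 := by
    rw [hj, show m / (l + m) = (m * D) / ((l + m) * D) by field_simp, div_le_one hk]; linarith
  have : ((p o).1 + k * ((p z).1 - (p o).1), (p o).2 + k * ((p z).2 - (p o).2)) ∈
      segment ℝ (p o) (p z) ∩ segment ℝ (p x) (p y) := by
    refine ⟨seg_mem k k1 k2 (by simp) (by simp), seg_mem j j1 j2 ?_ ?_⟩
    · rw [hkk, hj]; field_simp; linear_combination e1
    · rw [hkk, hj]; field_simp; linear_combination e2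
  rw [hs] at this
  exact this

theorem tri_edge (hp : IsPlaneDrawing G p) {o x y u v : V} (ox : G.Adj o x) (oy : G.Adj o y)
    (xy : G.Adj x y) (uv : G.Adj u v) (uo : u ≠ o) (ux : u ≠ x) (uy : u ≠ y) (vo : v ≠ o)
    (vx : v ≠ x) (vy : v ≠ y) (h : Tri (p o) (p x) (p y) (p u)) :
    Tri (p o) (p x) (p y) (p v) := by
  by_contra hv
  have hD := cr_ne hp ox oy xy
  obtain ⟨hi, hh, _, h4⟩ := hp
  have s1 := hh u v o x uv ox uo ux vo vx
  have s2 := hh u v o y uv oy uo uy vo vy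
  have s3 := hh u v x y uv xy ux uy vx vy
  obtain ⟨D, hDD⟩ : ∃ D, D = cr (p o) (p x) (p y) := ⟨_, rfl⟩
  unfold Tri at h hv
  rw [← hDD] at h hv hD
  have hD2 : 0 < D ^ 2 := by positivity
  let f : ℝ → ℝ × ℝ := fun s => (1 - s) • p u + s • p v
  have hf : Continuous f := by fun_prop
  let l : ℝ → ℝ := fun s => cr (p o) (f s) (p y) * D
  let m : ℝ → ℝ := fun s => cr (p o) (p x) (f s) * D
  have hl : Continuous l := by simp only [l, cr]; fun_prop
  have hm : Continuous m := by simp only [m, cr]; fun_prop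
  let g : ℝ → ℝ := fun s => min (min (l s) (m s)) (D ^ 2 - (l s + m s))
  have hg : Continuous g := by simp only [g]; fun_prop
  have f0 : f 0 = p u := by simp [f]
  have f1 : f 1 = p v := by simp [f]
  have g0 : 0 ≤ g 0 := by
    simp only [g, l, m, f0, le_min_iff]
    exact ⟨⟨h.1.le, h.2.1.le⟩, by linarith [h.2.2]⟩
  have g1 : g 1 ≤ 0 := by
    by_contra hg
    apply hv
    simp only [g, l, m, f1, not_le, lt_min_iff] at hg
    exact ⟨hg.1.1, hg.1.2, by linarith [hg.2]⟩
  obtain ⟨s, hs, hs0⟩ : ∃ s ∈ Icc (0:ℝ) 1, g s = 0 :=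
    intermediate_value_Icc' (zero_le_one) hg.continuousOn ⟨g1, g0⟩
  have hfs : f s ∈ segment ℝ (p u) (p v) :=
    ⟨1 - s, s, by linarith [hs.2], hs.1, by ring, rfl⟩
  have hge : 0 ≤ l s ∧ 0 ≤ m s ∧ l s + m s ≤ D ^ 2 := by
    have := hs0.ge
    simp only [g, le_min_iff] at this
    exact ⟨this.1.1, this.1.2, by linarith [this.2]⟩
  have hz : l s = 0 ∨ m s = 0 ∨ D ^ 2 = l s + m s := by
    rcases min_choice (min (l s) (m s)) (D ^ 2 - (l s + m s)) with h | h
    · rcases min_choice (l s) (m s) with h' | h'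
      · left; rw [← h', ← h]; exact hs0
      · right; left; rw [← h', ← h]; exact hs0
    · right; right; have : D ^ 2 - (l s + m s) = 0 := by rw [← h]; exact hs0
      linarith
  have e1 : D ^ 2 * ((f s).1 - (p o).1) = l s * ((p x).1 - (p o).1) + m s * ((p y).1 - (p o).1) := by
    simp only [l, m]; rw [hDD]; unfold cr; ring
  have e2 : D ^ 2 * ((f s).2 - (p o).2) = l s * ((p x).2 - (p o).2) + m s * ((p y).2 - (p o).2) := by
    simp only [l, m]; rw [hDD]; unfold cr; ring
  obtain ⟨hl0, hm0, hlm⟩ := hge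
  have mle : m s / D ^ 2 ≤ 1 := by rw [div_le_one hD2]; linarith
  have lle : l s / D ^ 2 ≤ 1 := by rw [div_le_one hD2]; linarith
  rcases hz with h | h | h
  · have : f s ∈ segment ℝ (p u) (p v) ∩ segment ℝ (p o) (p y) := by
      refine ⟨hfs, seg_mem (m s / D ^ 2) (by positivity) mle ?_ ?_⟩
      · rw [h] at e1; field_simp; linear_combination e1
      · rw [h] at e2; field_simp; linear_combination e2
    rw [s2] at this; exact this
  · have : f s ∈ segment ℝ (p u) (p v) ∩ segment ℝ (p o) (p x) := by
      refine ⟨hfs, seg_mem (l s / D ^ 2) (by positivity) lle ?_ ?_⟩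
      · rw [h] at e1; field_simp; linear_combination e1
      · rw [h] at e2; field_simp; linear_combination e2
    rw [s1] at this; exact this
  · have : f s ∈ segment ℝ (p u) (p v) ∩ segment ℝ (p x) (p y) := by
      refine ⟨hfs, seg_mem (m s / D ^ 2) (by positivity) mle ?_ ?_⟩
      · field_simp; linear_combination e1 - ((p x).1 - (p o).1) * h
      · field_simp; linear_combination e2 - ((p x).2 - (p o).2) * h
    rw [s3] at this; exact this

/-- step of a walk avoiding the triangle -/
def Stp (G : SimpleGraph V) (o x y u v : V) : Prop :=
  G.Adj u v ∧ u ≠ o ∧ u ≠ x ∧ u ≠ y ∧ v ≠ o ∧ v ≠ x ∧ v ≠ y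

theorem tri_walk (hp : IsPlaneDrawing G p) {o x y z w : V} (ox : G.Adj o x) (oy : G.Adj o y)
    (xy : G.Adj x y) (h : Relation.ReflTransGen (Stp G o x y) z w) :
    Tri (p o) (p x) (p y) (p z) ↔ Tri (p o) (p x) (p y) (p w) := by
  induction h with
  | refl => rfl
  | tail _ h ih =>
    obtain ⟨a, b, c, d, e, f, g⟩ := h
    rw [ih]
    exact ⟨tri_edge hp ox oy xy a b c d e f g, tri_edge hp ox oy xy a.symm e f g b c d⟩

theorem tri_sep (hp : IsPlaneDrawing G p) {o x y z w : V} (ox : G.Adj o x) (oy : G.Adj o y)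
    (xy : G.Adj x y) (oz : G.Adj o z) (ow : G.Adj o w) (zx : z ≠ x) (zy : z ≠ y) (wx : w ≠ x)
    (wy : w ≠ y) (h : Relation.ReflTransGen (Stp G o x y) z w) :
    SBt (angleAt (p o) (p x)) (angleAt (p o) (p y)) (angleAt (p o) (p z)) ↔
      SBt (angleAt (p o) (p x)) (angleAt (p o) (p y)) (angleAt (p o) (p w)) := by
  have hD := cr_ne hp ox oy xy
  have hi : ∀ {u}, G.Adj o u → p u ≠ p o := fun hu h => hu.ne' (hp.1 h)
  rw [angle_cone (hi ox) (hi oy) (hi oz) hD (angle_ne hp ox oz zx.symm) (angle_ne hp oy oz zy.symm),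
    angle_cone (hi ox) (hi oy) (hi ow) hD (angle_ne hp ox ow wx.symm) (angle_ne hp oy ow wy.symm),
    cone_tri hp ox oy xy oz zx zy, cone_tri hp ox oy xy ow wx wy, tri_walk hp ox oy xy h]

theorem string_sep (hp : IsPlaneDrawing G p) {R : OneStringRep G}
    {X : V → V → ℝ} {e : V → ℝ} (S : SData G R.γ X e) (hO : OrderPreserving G p R) {o x y z w : V}
    (ox : G.Adj o x) (oy : G.Adj o y)
    (xy : G.Adj x y) (oz : G.Adj o z) (ow : G.Adj o w) (zx : z ≠ x) (zy : z ≠ y) (wx : w ≠ x)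
    (wy : w ≠ y) (h : Relation.ReflTransGen (Stp G o x y) z w) :
    SBt (X o x) (X o y) (X o z) ↔ SBt (X o x) (X o y) (X o w) :=
  order_transfer S hO ox oy oz ow zx.symm zy.symm wx.symm wy.symm
    (tri_sep hp ox oy xy oz ow zx zy wx wy h)

end drawing


theorem chain_lt {n : ℕ} (hn : 3 ≤ n) (f : ℕ → ℝ)
    (inj : ∀ j k, j < n → k < n → j ≠ k → f j ≠ f k)
    (h0 : ∀ j, 0 < j → j < n → f 0 < f j) (h1 : f 1 < f (n - 1))
    (H : ∀ k, k + 1 < n → ∀ j l, j < n → l < n → j ≠ k → j ≠ k + 1 → l ≠ k → l ≠ k + 1 →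
      SBt (f k) (f (k+1)) (f j) → SBt (f k) (f (k+1)) (f l)) :
    ∀ k j, k < j → j < n → f k < f j := by
  intro k
  induction k with
  | zero => intro j; exact h0 j
  | succ k ih =>
    intro j hj hjn
    have e1 := ih j (by omega) hjn
    have e2 := ih (k+1) (by omega) (by omega)
    have hne := inj (k+1) j (by omega) hjn (by omega)
    by_contra hc
    have hlt : f j < f (k+1) := lt_of_le_of_ne (not_lt.1 hc) hne.symm
    have hS : SBt (f k) (f (k+1)) (f j) := Or.inl ⟨e1, hlt⟩
    rcases Nat.eq_zero_or_pos k with rfl | hk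
    · by_cases hj' : j = n - 1
      · subst hj'; simp only [zero_add] at hlt; linarith
      · have := H 0 (by omega) j (n-1) hjn (by omega) (by omega) (by omega) (by omega) (by omega) hS
        simp only [zero_add] at this
        rcases this with h | h
        · linarith [h.1, h.2]
        · have := h0 1 (by omega) (by omega)
          linarith [h.1, h.2]
    · have := H k (by omega) j 0 hjn (by omega) (by omega) (by omega) (by omega) (by omega) hS
      have h2 := h0 k hk (by omega)
      rcases this with h | h <;> linarith [h.1, h.2]

section wheel
variable {n : ℕ}

abbrev cV (n : ℕ) : Option (ZMod n) ⊕ ZMod n := Sum.inl none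
abbrev vV (i : ZMod n) : Option (ZMod n) ⊕ ZMod n := Sum.inl (some i)
abbrev wV (i : ZMod n) : Option (ZMod n) ⊕ ZMod n := Sum.inr i

theorem adj_cv (i : ZMod n) : (extWheelGraph n).Adj (cV n) (vV i) := by
  simp [extWheelGraph]

theorem adj_vv (i j : ZMod n) :
    (extWheelGraph n).Adj (vV i) (vV j) ↔ i ≠ j ∧ (j = i + 1 ∨ i = j + 1) := by
  simp [extWheelGraph]

theorem adj_wv (i j : ZMod n) :
    (extWheelGraph n).Adj (wV i) (vV j) ↔ (j = i ∨ j = i + 1) := by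
  simp [extWheelGraph]

theorem na_wc (i : ZMod n) : NA (extWheelGraph n) (wV i) (cV n) := by
  simp [extWheelGraph, NA]

theorem na_vv (i j : ZMod n) (h : i ≠ j) (h1 : j ≠ i + 1) (h2 : i ≠ j + 1) :
    NA (extWheelGraph n) (vV i) (vV j) := by
  simp [extWheelGraph, NA, *]

theorem na_wv (i j : ZMod n) (h1 : j ≠ i) (h2 : j ≠ i + 1) :
    NA (extWheelGraph n) (wV i) (vV j) := by
  simp [extWheelGraph, NA, *]

theorem zcast_inj {a b : ℕ} (ha : a < n) (hb : b < n) (h : (a : ZMod n) = b) : a = b := by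
  rw [ZMod.natCast_eq_natCast_iff', Nat.mod_eq_of_lt ha, Nat.mod_eq_of_lt hb] at h
  exact h

theorem rim_walk (hn : 7 ≤ n) (i : ZMod n) (m : ℕ) (hm : m + 2 < n) :
    Relation.ReflTransGen (Stp (extWheelGraph n) (cV n) (vV i) (vV (i+1)))
      (vV (i + 2)) (vV (i + 2 + m)) := by
  have ne : ∀ m : ℕ, m + 2 < n → i + 2 + (m : ZMod n) ≠ i ∧ i + 2 + (m : ZMod n) ≠ i + 1 := by
    intro m hm
    constructor
    · intro h
      have : ((m + 2 : ℕ) : ZMod n) = (0 : ℕ) := by push_cast; linear_combination h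
      have := zcast_inj hm (by omega) this
      omega
    · intro h
      have : ((m + 2 : ℕ) : ZMod n) = (1 : ℕ) := by push_cast; linear_combination h
      have := zcast_inj hm (by omega) this
      omega
  induction m with
  | zero => simp only [Nat.cast_zero, add_zero]; exact .refl
  | succ m ih =>
    refine (ih (by omega)).tail ⟨?_, by simp, ?_, ?_, by simp, ?_, ?_⟩
    · rw [adj_vv]
      refine ⟨?_, Or.inl (by push_cast; ring)⟩
      intro h
      have : ((1 : ℕ) : ZMod n) = (0 : ℕ) := by push_cast at h ⊢; linear_combination -h
      have := zcast_inj (by omega) (by omega) this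
      omega
    · simpa using (ne m (by omega)).1
    · simpa using (ne m (by omega)).2
    · simpa using (ne (m+1) hm).1
    · simpa using (ne (m+1) hm).2

theorem stp_symm {V : Type} {G : SimpleGraph V} {o x y u v : V} (h : Stp G o x y u v) :
    Stp G o x y v u := by
  obtain ⟨a, b, c, d, e, f, g⟩ := h
  exact ⟨a.symm, e, f, g, b, c, d⟩

theorem rtg_symm {V : Type} {G : SimpleGraph V} {o x y u v : V}
    (h : Relation.ReflTransGen (Stp G o x y) u v) : Relation.ReflTransGen (Stp G o x y) v u := by
  induction h with
  | refl => exact .refl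
  | tail _ h ih => exact .head (stp_symm h) ih

theorem rim_conn (hn : 7 ≤ n) (i j k : ZMod n) (ji : j ≠ i) (ji' : j ≠ i + 1) (ki : k ≠ i)
    (ki' : k ≠ i + 1) :
    Relation.ReflTransGen (Stp (extWheelGraph n) (cV n) (vV i) (vV (i+1))) (vV j) (vV k) := by
  have : NeZero n := ⟨by omega⟩
  have key : ∀ j : ZMod n, j ≠ i → j ≠ i + 1 →
      Relation.ReflTransGen (Stp (extWheelGraph n) (cV n) (vV i) (vV (i+1))) (vV (i+2)) (vV j) := by
    intro j h1 h2
    have hlt := ZMod.val_lt (j - i)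
    have hv : (((j - i).val : ℕ) : ZMod n) = j - i := ZMod.natCast_zmod_val _
    obtain ⟨m, hm⟩ : ∃ m, (j - i).val = m + 2 := by
      refine ⟨(j - i).val - 2, ?_⟩
      have a1 : (j - i).val ≠ 0 := by
        intro h; rw [h] at hv; apply h1; push_cast at hv; linear_combination -hv
      have a2 : (j - i).val ≠ 1 := by
        intro h; rw [h] at hv; apply h2; push_cast at hv; linear_combination -hv
      omega
    rw [hm] at hv hlt
    have := rim_walk hn i m hlt
    convert this using 3
    push_cast at hv
    linear_combination -hv
  have h1 := key j ji ji'
  have h2 := key k ki ki'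
  have h3 : Relation.ReflTransGen (Stp (extWheelGraph n) (cV n) (vV i) (vV (i+1)))
      (vV j) (vV (i+2)) :=
    rtg_symm h1
  exact h3.trans h2

theorem main_false (hn : 7 ≤ n) {p : Option (ZMod n) ⊕ ZMod n → ℝ × ℝ}
    (hp : IsPlaneDrawing (extWheelGraph n) p) {R : OneStringRep (extWheelGraph n)}
    (hO : OrderPreserving (extWheelGraph n) p R)
    {X : Option (ZMod n) ⊕ ZMod n → Option (ZMod n) ⊕ ZMod n → ℝ}
    {e : Option (ZMod n) ⊕ ZMod n → ℝ} (S : SData (extWheelGraph n) R.γ X e) : False := by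
  have : NeZero n := ⟨by omega⟩
  have nz : ∀ k : ℕ, 0 < k → k < n → (k : ZMod n) ≠ 0 := by
    intro k h1 h2 h
    have := zcast_inj (b := 0) h2 (by omega) (by rw [h]; simp)
    omega
  have z1 : (1 : ZMod n) ≠ 0 := by simpa using nz 1 (by omega) (by omega)
  have z2 : (2 : ZMod n) ≠ 0 := by simpa using nz 2 (by omega) (by omega)
  have z3 : (3 : ZMod n) ≠ 0 := by simpa using nz 3 (by omega) (by omega)
  have z4 : (4 : ZMod n) ≠ 0 := by simpa using nz 4 (by omega) (by omega)
  have z5 : (5 : ZMod n) ≠ 0 := by simpa using nz 5 (by omega) (by omega)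
  have z6 : (6 : ZMod n) ≠ 0 := by simpa using nz 6 (by omega) (by omega)
  obtain ⟨t, ht⟩ : ∃ t : ZMod n → ℝ, t = fun i => X (cV n) (vV i) := ⟨_, rfl⟩
  have tinj : ∀ i j, i ≠ j → t i ≠ t j := by
    intro i j h
    rw [ht]
    exact S.inj _ _ _ (adj_cv i) (adj_cv j) (by simpa using h)
  have HH : ∀ i j k, j ≠ i → j ≠ i + 1 → k ≠ i → k ≠ i + 1 →
      (SBt (t i) (t (i+1)) (t j) ↔ SBt (t i) (t (i+1)) (t k)) := by
    intro i j k h1 h2 h3 h4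
    rw [ht]
    refine string_sep hp S hO (adj_cv _) (adj_cv _) ?_ (adj_cv _) (adj_cv _) (by simpa using h1)
      (by simpa using h2) (by simpa using h3) (by simpa using h4) (rim_conn hn i j k h1 h2 h3 h4)
    rw [adj_vv]
    exact ⟨fun h => z1 (by linear_combination -h), Or.inl rfl⟩
  obtain ⟨i0, hi0⟩ := Finite.exists_min t
  have chain : ∀ ε : ZMod n, (ε = 1 ∨ ε = -1) → t (i0 + ε) < t (i0 - ε) →
      ∀ k j : ℕ, k < j → j < n → t (i0 + ε * k) < t (i0 + ε * j) := by
    intro ε hε h1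
    have hε2 : ε * ε = 1 := by rcases hε with rfl | rfl <;> ring
    have ij : ∀ j k : ℕ, j < n → k < n → i0 + ε * j = i0 + ε * k → j = k := by
      intro j k hj hk h
      apply zcast_inj hj hk
      linear_combination ε * h - (j - k : ZMod n) * hε2
    apply chain_lt (by omega) (fun k : ℕ => t (i0 + ε * k))
    · intro j k hj hk hjk
      exact tinj _ _ fun h => hjk (ij j k hj hk h)
    · intro j hj hjn
      simp only [Nat.cast_zero, mul_zero, add_zero]
      refine lt_of_le_of_ne (hi0 _) (tinj _ _ ?_)
      intro h
      have := ij 0 j (by omega) hjn (by simpa using h)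
      omega
    · have : ((n - 1 : ℕ) : ZMod n) = -1 := by
        rw [Nat.cast_sub (by omega)]; simp
      simp only [this, Nat.cast_one, mul_one, mul_neg, ← sub_eq_add_neg]
      exact h1
    · intro k hk j l hj hl jk jk' lk lk' hS
      have a1 : i0 + ε * j ≠ i0 + ε * k := fun h => jk (ij _ _ hj (by omega) h)
      have a2 : i0 + ε * j ≠ i0 + ε * (k + 1 : ℕ) := fun h => jk' (ij _ _ hj (by omega) h)
      have a3 : i0 + ε * l ≠ i0 + ε * k := fun h => lk (ij _ _ hl (by omega) h)
      have a4 : i0 + ε * l ≠ i0 + ε * (k + 1 : ℕ) := fun h => lk' (ij _ _ hl (by omega) h)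
      rcases hε with hε | hε
      · have e1 : i0 + ε * (k + 1 : ℕ) = i0 + ε * k + 1 := by rw [hε]; push_cast; ring
        simp only [e1] at *
        exact (HH _ _ _ a1 a2 a3 a4).1 hS
      · have e1 : i0 + ε * k = i0 + ε * (k + 1 : ℕ) + 1 := by rw [hε]; push_cast; ring
        simp only [e1] at *
        have := (HH _ _ _ a2 a1 a4 a3).1 (Or.symm hS)
        exact Or.symm this
  have fin : ∀ ε δ : ZMod n, ((ε = 1 ∧ δ = 0) ∨ (ε = -1 ∧ δ = -1)) → t (i0 + ε) < t (i0 - ε) →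
      False := by
    intro ε δ hε hlt
    have ch := chain ε (by rcases hε with h | h <;> simp [h.1]) hlt
    have o1 := ch 0 2 (by omega) (by omega)
    have o2 := ch 2 3 (by omega) (by omega)
    have o3 := ch 3 4 (by omega) (by omega)
    have o4 := ch 4 (n-1) (by omega) (by omega)
    have hn1 : ((n - 1 : ℕ) : ZMod n) = -1 := by
      rw [Nat.cast_sub (by omega)]; simp
    rw [hn1] at o4
    push_cast at o1 o2 o3 o4
    simp only [mul_zero, add_zero, mul_neg, mul_one, ← sub_eq_add_neg] at o1 o4
    have A1 : (extWheelGraph n).Adj (vV i0) (vV (i0 - ε)) := by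
      rw [adj_vv]; clear * - z1 hε; grind
    have A2 : (extWheelGraph n).Adj (vV (i0 + ε * 2)) (vV (i0 + ε * 3)) := by
      rw [adj_vv]; clear * - z1 hε; grind
    have A3 : (extWheelGraph n).Adj (vV (i0 + ε * 3)) (vV (i0 + ε * 4)) := by
      rw [adj_vv]; clear * - z1 hε; grind
    have B1 : (extWheelGraph n).Adj (wV (i0 + ε * 2 + δ)) (vV (i0 + ε * 2)) := by
      rw [adj_wv]; clear * - z1 hε; grind
    have B2 : (extWheelGraph n).Adj (wV (i0 + ε * 2 + δ)) (vV (i0 + ε * 3)) := by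
      rw [adj_wv]; clear * - z1 hε; grind
    have B3 : (extWheelGraph n).Adj (wV (i0 + ε * 3 + δ)) (vV (i0 + ε * 3)) := by
      rw [adj_wv]; clear * - z1 hε; grind
    have B4 : (extWheelGraph n).Adj (wV (i0 + ε * 3 + δ)) (vV (i0 + ε * 4)) := by
      rw [adj_wv]; clear * - z1 hε; grind
    have C1 : vV (i0 + ε * 2) ≠ vV (i0 + ε * 4) := by
      simp only [ne_eq, Sum.inl.injEq, Option.some.injEq]; clear * - z2 hε; grind
    have C2 : wV (i0 + ε * 2 + δ) ≠ wV (i0 + ε * 3 + δ) := by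
      simp only [ne_eq, Sum.inr.injEq]; clear * - z1 hε; grind
    refine core S (c := cV n) (a := vV i0) (b := vV (i0 - ε)) (v3 := vV (i0 + ε * 2))
      (v4 := vV (i0 + ε * 3)) (v5 := vV (i0 + ε * 4)) (w3 := wV (i0 + ε * 2 + δ))
      (w4 := wV (i0 + ε * 3 + δ)) ?_
    refine ⟨adj_cv _, adj_cv _, adj_cv _, adj_cv _, adj_cv _, A1, A2, A3, B1, B2, B3, B4,
      na_vv _ _ ?_ ?_ ?_, na_vv _ _ ?_ ?_ ?_, na_vv _ _ ?_ ?_ ?_, na_vv _ _ ?_ ?_ ?_,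
      na_vv _ _ ?_ ?_ ?_, na_vv _ _ ?_ ?_ ?_, na_wc _, na_wv _ _ ?_ ?_, na_wv _ _ ?_ ?_,
      na_wc _, na_wv _ _ ?_ ?_, na_wv _ _ ?_ ?_, na_wv _ _ ?_ ?_, na_wv _ _ ?_ ?_,
      na_vv _ _ ?_ ?_ ?_, C2, ?_, ?_, ?_⟩
    rotate_right 3
    · rw [ht] at o1 o2 o3 o4
      exact Or.inl ⟨o1, o2, o3, o4⟩
    · refine string_sep hp S hO A3 B3.symm B4.symm (adj_cv _).symm B2.symm (by simp) (by simp)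
        (by simp) C2 ?_
      refine .tail (.tail .refl (?_ : Stp _ _ _ _ _ (vV (i0 + ε * 2)))) ?_
      · exact ⟨adj_cv _, by simp, by simp, by simp, A2.ne, C1, by simp⟩
      · exact ⟨B1.symm, A2.ne, C1, by simp, by simp, by simp, C2⟩
    · refine string_sep hp S hO A2.symm B2.symm B1.symm (adj_cv _).symm B3.symm (by simp) (by simp)
        (by simp) C2.symm ?_
      refine .tail (.tail .refl (?_ : Stp _ _ _ _ _ (vV (i0 + ε * 4)))) ?_
      · exact ⟨adj_cv _, by simp, by simp, by simp, A3.ne', C1.symm, by simp⟩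
      · exact ⟨B4.symm, A3.ne', C1.symm, by simp, by simp, by simp, C2.symm⟩
    all_goals
      clear * - z1 z2 z3 z4 z5 z6 hε
      rcases hε with ⟨rfl, rfl⟩ | ⟨rfl, rfl⟩ <;> intro h <;> first
        | exact z1 (by linear_combination h)
        | exact z1 (by linear_combination -h)
        | exact z2 (by linear_combination h)
        | exact z2 (by linear_combination -h)
        | exact z3 (by linear_combination h)
        | exact z3 (by linear_combination -h)
        | exact z4 (by linear_combination h)
        | exact z4 (by linear_combination -h)
        | exact z5 (by linear_combination h)
        | exact z5 (by linear_combination -h)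
        | exact z6 (by linear_combination h)
        | exact z6 (by linear_combination -h)
  rcases lt_trichotomy (t (i0 + 1)) (t (i0 - 1)) with h | h | h
  · exact fin 1 0 (by simp) h
  · refine tinj _ _ ?_ h
    intro h; exact z2 (by linear_combination h)
  · exact fin (-1) (-1) (by simp) (by simpa [← sub_eq_add_neg] using h)

end wheel


end helpers

/-- For `n ≥ 7`, the extended wheel graph `W n⁺` has no order-preserving outer-1-string
representation: no order-preserving 1-string representation in which every arc has at
least one endpoint in the closure of the contour. -/
theorem stmt_8 (n : ℕ) (hn : 7 ≤ n) (p : Option (ZMod n) ⊕ ZMod n → ℝ × ℝ)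
    (hp : IsPlaneDrawing (extWheelGraph n) p) :
    ¬ ∃ R : OneStringRep (extWheelGraph n),
        OrderPreserving (extWheelGraph n) p R ∧
        ∀ v : Option (ZMod n) ⊕ ZMod n,
          (R.γ v).toFun 0 ∈ closure (contour R.γ) ∨
          (R.γ v).toFun 1 ∈ closure (contour R.γ) := by
  rintro ⟨R, hO, ho⟩
  obtain ⟨X, e, S⟩ := exSData R ho
  exact main_false hn hp hO S
end

section
/- For every integer n ≥ 7 and for every straight-line plane drawing p of the wheel graph W_n, there is no 1-string representation of W_n that is order-preserving with respect to p and in which every arc has both of its endpoints in the closure of the contour of the family of arcs. -/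
section Aux
open Set Complex

lemma log_lift (f : ℝ × ℝ → ℂ) (hf : Continuous f) (h0 : ∀ x, f x ≠ 0) :
    ∃ g : ℝ × ℝ → ℂ, Continuous g ∧ ∀ x, exp (g x) = f x := by
  have hc : ContractibleSpace (Set.univ : Set (ℝ × ℝ)) :=
    convex_univ.contractibleSpace univ_nonempty
  have hs : IsSimplyConnected (Set.univ : Set (ℝ × ℝ)) :=
    inferInstanceAs (SimplyConnectedSpace (Set.univ : Set (ℝ × ℝ)))
  obtain ⟨g, hg, hg'⟩ := Complex.exists_continuousOn_eqOn_exp_comp (X := ℝ × ℝ) (U := Set.univ)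
    hs isOpen_univ (g := f) hf.continuousOn
    (by rintro ⟨x, -, hx⟩; exact h0 x hx)
  exact ⟨g, continuousOn_univ.mp hg, fun x => hg' (mem_univ x)⟩

lemma log_diff (f g : ℝ → ℂ) (hf : Continuous f) (hg : Continuous g) (a b : ℝ) (hab : a ≤ b)
    (h : ∀ x ∈ Icc a b, exp (f x) = exp (g x)) : f b - f a = g b - g a := by
  have key : ∀ x ∈ Icc a b, ∃ n : ℤ, f x = g x + n * (2 * Real.pi * I) := fun x hx =>
    Complex.exp_eq_exp_iff_exists_int.mp (h x hx)
  set u : ℝ → ℝ := fun x => (f x - g x).im / (2 * Real.pi) with hu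
  have hux : ∀ x ∈ Icc a b, f x - g x = (u x : ℂ) * (2 * Real.pi * I) ∧
      u x ∈ Set.range ((↑) : ℤ → ℝ) := by
    intro x hx
    obtain ⟨n, hn⟩ := key x hx
    have h1 : f x - g x = n * (2 * Real.pi * I) := by rw [hn]; ring
    have h2 : u x = n := by
      simp only [hu, h1]
      have := Real.pi_ne_zero
      simp
    exact ⟨by rw [h1, h2]; simp, n, h2.symm⟩
  have hd : DiscreteTopology (Set.range ((↑) : ℤ → ℝ)) :=
    (Int.isClosedEmbedding_coe_real.isEmbedding.toHomeomorph).symm.isEmbedding.discreteTopology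
  have huc : Continuous u := by
    simp only [hu]
    exact (Complex.continuous_im.comp (hf.sub hg)).div_const _
  have := isPreconnected_Icc.constant_of_mapsTo (S := Icc a b) ⟨hd⟩ huc.continuousOn
    (fun x hx => (hux x hx).2) (left_mem_Icc.mpr hab) (right_mem_Icc.mpr hab)
  have h1 := (hux a (left_mem_Icc.mpr hab)).1
  have h2 := (hux b (right_mem_Icc.mpr hab)).1
  rw [← this, ← h1] at h2
  linear_combination h2

/-- clamp -/
noncomputable def cl (y : ℝ) : ℝ := max (-1) (min 1 y)

lemma cl_cont : Continuous cl := by unfold cl; fun_prop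
lemma cl_mem (y : ℝ) : cl y ∈ Icc (-1 : ℝ) 1 := by
  unfold cl; constructor
  · exact le_max_left _ _
  · exact max_le (by norm_num) (min_le_left _ _)
lemma cl_of_mem {y : ℝ} (h : y ∈ Icc (-1 : ℝ) 1) : cl y = y := by
  unfold cl; rw [min_eq_right h.2, max_eq_right h.1]

/-- square parametrisation -/
noncomputable def sx (θ : ℝ) : ℝ := cl (max (2 - θ) (θ - 6))
noncomputable def sy (θ : ℝ) : ℝ := cl (min θ (4 - θ))

lemma cl_ge {y : ℝ} (h : 1 ≤ y) : cl y = 1 := by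
  unfold cl; rw [min_eq_left h, max_eq_right (by norm_num)]
lemma cl_le {y : ℝ} (h : y ≤ -1) : cl y = -1 := by
  unfold cl; rw [min_eq_right (by linarith), max_eq_left h]
lemma cl_neg (y : ℝ) : cl (-y) = - cl y := by
  unfold cl
  rcases le_total y (-1) with h | h <;> rcases le_total y 1 with h' | h' <;>
    simp only [max_def, min_def] <;> split_ifs <;> linarith

lemma sx1 {θ : ℝ} (h : θ ≤ 1) : sx θ = 1 := cl_ge (le_max_of_le_left (by linarith))
lemma sx2 {θ : ℝ} (h : θ ≤ 4) : sx θ = cl (2 - θ) := by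
  unfold sx; rw [max_eq_left (by linarith)]
lemma sx3 {θ : ℝ} (h : θ ∈ Icc (3:ℝ) 5) : sx θ = -1 :=
  cl_le (max_le (by linarith [h.1]) (by linarith [h.2]))
lemma sx4 {θ : ℝ} (h : 4 ≤ θ) : sx θ = cl (θ - 6) := by
  unfold sx; rw [max_eq_right (by linarith)]
lemma sy1 {θ : ℝ} (h : θ ≤ 2) : sy θ = cl θ := by
  unfold sy; rw [min_eq_left (by linarith)]
lemma sy2 {θ : ℝ} (h : θ ∈ Icc (1:ℝ) 3) : sy θ = 1 :=
  cl_ge (le_min (by linarith [h.1]) (by linarith [h.2]))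
lemma sy3 {θ : ℝ} (h : 2 ≤ θ) : sy θ = cl (4 - θ) := by
  unfold sy; rw [min_eq_right (by linarith)]
lemma sy4 {θ : ℝ} (h : 5 ≤ θ) : sy θ = -1 :=
  cl_le (min_le_of_right_le (by linarith))

lemma sx_odd {θ : ℝ} (h : θ ∈ Icc (-1:ℝ) 3) : sx (θ + 4) = - sx θ := by
  rw [sx2 (θ := θ) (by linarith [h.2])]
  rcases le_total θ 0 with h0 | h0
  · rw [sx3 ⟨by linarith [h.1], by linarith⟩, cl_ge (by linarith)]
  · rw [sx4 (by linarith), ← cl_neg]; congr 1; ring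
lemma sy_odd {θ : ℝ} (h : θ ∈ Icc (-1:ℝ) 3) : sy (θ + 4) = - sy θ := by
  rw [sy3 (θ := θ + 4) (by linarith [h.1])]
  rcases le_total θ 2 with h0 | h0
  · rw [sy1 h0, ← cl_neg]; congr 1; ring
  · rw [sy3 h0, cl_le (by linarith), cl_ge (by linarith [h.2])]
lemma sx_cont : Continuous sx := cl_cont.comp (by fun_prop)
lemma sy_cont : Continuous sy := cl_cont.comp (by fun_prop)
lemma sxy (θ : ℝ) : sx θ ≠ 0 ∨ sy θ ≠ 0 := by
  rcases le_total θ 1 with h1 | h1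
  · left; rw [sx1 h1]; norm_num
  rcases le_total θ 3 with h3 | h3
  · right; rw [sy2 ⟨h1, h3⟩]; norm_num
  rcases le_total θ 5 with h5 | h5
  · left; rw [sx3 ⟨h3, h5⟩]; norm_num
  · right; rw [sy4 h5]; norm_num

theorem core_s9 (ψ : ℝ × ℝ → ℂ) (hψ : Continuous ψ)
    (inj : Set.InjOn ψ (Icc (-1) 1 ×ˢ Icc (-1) 1)) (J K : ℝ → ℂ)
    (hJ : Continuous J) (hK : Continuous K) (J0 : J 0 = ψ (1, 0)) (J1 : J 1 = ψ (-1, 0))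
    (K0 : K 0 = ψ (0, 1)) (K1 : K 1 = ψ (0, -1))
    (hJψ : ∀ s, ∀ y ∈ Icc (-1:ℝ) 1, J s ≠ ψ (0, y))
    (hKψ : ∀ t, ∀ x ∈ Icc (-1:ℝ) 1, K t ≠ ψ (x, 0))
    (hJK : ∀ s t, J s ≠ K t) : False := by
  have ccl := cl_cont
  have csx := sx_cont
  have csy := sy_cont
  obtain ⟨L1, cL1, eL1⟩ := log_lift (fun z => J z.1 - K z.2) (by fun_prop)
    (fun z => sub_ne_zero.mpr (hJK _ _))
  obtain ⟨L2, cL2, eL2⟩ := log_lift (fun z => J z.1 - ψ (0, cl z.2)) (by fun_prop)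
    (fun z => sub_ne_zero.mpr (hJψ _ _ (cl_mem _)))
  obtain ⟨L3, cL3, eL3⟩ := log_lift (fun z => ψ (cl z.1, 0) - K z.2) (by fun_prop)
    (fun z => sub_ne_zero.mpr (hKψ _ _ (cl_mem _)).symm)
  -- r clamped to [0,1]
  obtain ⟨M, cM, eM⟩ := log_lift
    (fun z => ψ (sx z.2, -(|cl z.1| * sy z.2)) - ψ (-(|cl z.1| * sx z.2), sy z.2))
    (by fun_prop) (by
      intro z hz
      have hr : |cl z.1| ≤ 1 := abs_le.mpr (cl_mem _)
      have hr0 := abs_nonneg (cl z.1)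
      have hx : sx z.2 ∈ Icc (-1:ℝ) 1 := cl_mem _
      have hy : sy z.2 ∈ Icc (-1:ℝ) 1 := cl_mem _
      have hm : ∀ w ∈ Icc (-1:ℝ) 1, -(|cl z.1| * w) ∈ Icc (-1:ℝ) 1 := by
        intro w hw
        have : |(|cl z.1| * w)| ≤ 1 := by
          rw [abs_mul, abs_abs]
          exact mul_le_one₀ hr (abs_nonneg _) (abs_le.mpr hw)
        have := abs_le.mp this
        constructor <;> linarith
      have := inj (Set.mk_mem_prod hx (hm _ hy)) (Set.mk_mem_prod (hm _ hx) hy)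
        (sub_eq_zero.mp hz)
      simp only [Prod.mk.injEq] at this
      obtain ⟨h1, h2⟩ := this
      rcases sxy z.2 with h | h
      · apply h; have : (1 + |cl z.1|) * sx z.2 = 0 := by linarith
        rcases mul_eq_zero.mp this with h | h
        · linarith
        · exact h
      · apply h; have : (1 + |cl z.1|) * sy z.2 = 0 := by linarith
        rcases mul_eq_zero.mp this with h | h
        · linarith
        · exact h)
  have c1 : cl 1 = 1 := cl_ge le_rfl
  have cm1 : cl (-1) = -1 := cl_le le_rfl
  have c0 : cl 0 = 0 := cl_of_mem (by norm_num)
  -- relations L1 with L2, L3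
  have r1 := log_diff (fun s => L2 (s, 1)) (fun s => L1 (s, 0)) (by fun_prop) (by fun_prop) 0 1
    zero_le_one (fun x _ => by simp only [eL1, eL2, c1, K0])
  have r2 := log_diff (fun s => L2 (s, -1)) (fun s => L1 (s, 1)) (by fun_prop) (by fun_prop) 0 1
    zero_le_one (fun x _ => by simp only [eL1, eL2, cm1, K1])
  have r3 := log_diff (fun s => L3 (1, s)) (fun s => L1 (0, s)) (by fun_prop) (by fun_prop) 0 1
    zero_le_one (fun x _ => by simp only [eL1, eL3, c1, J0])
  have r4 := log_diff (fun s => L3 (-1, s)) (fun s => L1 (1, s)) (by fun_prop) (by fun_prop) 0 1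
    zero_le_one (fun x _ => by simp only [eL1, eL3, cm1, J1])
  -- relations of M with L2, L3
  have m1 := log_diff (fun θ => M (0, θ)) (fun θ => L2 (0, θ)) (by fun_prop) (by fun_prop) (-1) 1
    (by norm_num) (fun x hx => by
      simp [eM, eL2, c0, J0, sx1 hx.2, sy1 (hx.2.trans one_le_two)])
  have m2 := log_diff (fun θ => M (0, θ)) (fun θ => L3 (2 - θ, 0)) (by fun_prop) (by fun_prop) 1 3
    (by norm_num) (fun x hx => by
      simp [eM, eL3, c0, K0, sx2 (hx.2.trans (by norm_num)), sy2 hx])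
  have m3 := log_diff (fun θ => M (0, θ)) (fun θ => L2 (1, 4 - θ)) (by fun_prop) (by fun_prop) 3 5
    (by norm_num) (fun x hx => by
      simp [eM, eL2, c0, J1, sx3 hx, sy3 (le_trans (by norm_num) hx.1)])
  have m4 := log_diff (fun θ => M (0, θ)) (fun θ => L3 (θ - 6, 1)) (by fun_prop) (by fun_prop) 5 7
    (by norm_num) (fun x hx => by
      simp [eM, eL3, c0, K1, sx4 (le_trans (by norm_num) hx.1), sy4 hx.1])
  have m5 := log_diff (fun r => M (r, 7)) (fun r => M (r, -1)) (by fun_prop) (by fun_prop) 0 1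
    (by norm_num) (fun x hx => by
      have a1 : sx 7 = 1 := by rw [sx4 (by norm_num)]; exact cl_ge (by norm_num)
      have a2 : sx (-1) = 1 := sx1 (by norm_num)
      have a3 : sy 7 = -1 := sy4 (by norm_num)
      have a4 : sy (-1) = -1 := by rw [sy1 (by norm_num), cm1]
      simp only [eM, a1, a2, a3, a4])
  have hodd : ∀ θ ∈ Icc (-1:ℝ) 3, exp (M (1, θ + 4)) = - exp (M (1, θ)) := by
    intro θ hθ
    simp [eM, c1, sx_odd hθ, sy_odd hθ]
  have m6 := log_diff (fun θ => M (1, θ + 4)) (fun θ => M (1, θ) + Real.pi * I)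
    (by fun_prop) (by fun_prop) (-1) 3 (by norm_num) (fun x hx => by
      simp only [hodd x hx, exp_add, exp_pi_mul_I]; ring)
  have h3 := hodd (-1) (by norm_num)
  norm_num at r1 r2 r3 r4 m1 m2 m3 m4 m5 m6 h3
  have : M (1, 3) = M (1, -1) := by
    linear_combination (1/2) * (m5 + m1 + m2 + m3 + m4 - m6 - r1 + r2 + r3 - r4)
  rw [this] at h3
  have := exp_ne_zero (M (1, -1))
  apply this
  linear_combination (1/2) * h3

lemma arc_joined (g : Arc) (F : Set (ℝ × ℝ)) (s t : ℝ) (hs : s ∈ Icc (0:ℝ) 1)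
    (ht : t ∈ Icc (0:ℝ) 1) (h : ∀ u ∈ Icc (0:ℝ) 1, u ∈ uIcc s t → g.toFun u ∈ F) :
    JoinedIn F (g.toFun s) (g.toFun t) := by
  have hsub : uIcc s t ⊆ Icc 0 1 := uIcc_subset_Icc hs ht
  have h1 : IsPathConnected (uIcc s t) := (convex_uIcc s t).isPathConnected ⟨s, left_mem_uIcc⟩
  have h2 : IsPathConnected (g.toFun '' uIcc s t) := h1.image' (g.contOn.mono hsub)
  refine (h2.joinedIn _ (mem_image_of_mem _ left_mem_uIcc) _
    (mem_image_of_mem _ right_mem_uIcc)).mono ?_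
  rintro _ ⟨u, hu, rfl⟩
  exact h u (hsub hu) hu

lemma arc_img_joined (g : Arc) (F : Set (ℝ × ℝ)) (h : g.img ⊆ F) {x y : ℝ × ℝ}
    (hx : x ∈ g.img) (hy : y ∈ g.img) : JoinedIn F x y := by
  obtain ⟨s, hs, rfl⟩ := hx
  obtain ⟨t, ht, rfl⟩ := hy
  exact arc_joined g F s t hs ht (fun u hu _ => h (mem_image_of_mem _ hu))

lemma arc_compact (g : Arc) : IsCompact g.img := isCompact_Icc.image_of_continuousOn g.contOn

lemma arc_sides (g : Arc) (f : ℝ → ℝ × ℝ) (hf : ContinuousOn f (Icc (-1) 1))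
    (hi : InjOn f (Icc (-1) 1)) (hg : ∀ x ∈ Icc (-1:ℝ) 1, f x ∈ g.img) (t0 : ℝ)
    (ht0 : t0 ∈ Icc (0:ℝ) 1) (h0 : f 0 = g.toFun t0) :
    ∃ s ∈ Icc (0:ℝ) 1, ∃ s' ∈ Icc (0:ℝ) 1, f 1 = g.toFun s ∧ f (-1) = g.toFun s' ∧
      ((s' < t0 ∧ t0 < s) ∨ (s < t0 ∧ t0 < s')) := by
  choose! u hu hgu using hg
  have hemb : Topology.IsClosedEmbedding ((Icc (0:ℝ) 1).domRestrict g.toFun) :=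
    Continuous.isClosedEmbedding (continuousOn_iff_continuous_domRestrict.mp g.contOn)
      (injOn_iff_injective.mp g.injOn)
  have huc : ContinuousOn u (Icc (-1) 1) := by
    rw [continuousOn_iff_continuous_domRestrict]
    have : Continuous (fun x : Icc (-1:ℝ) 1 => (⟨u x, hu x x.2⟩ : Icc (0:ℝ) 1)) := by
      rw [hemb.isEmbedding.continuous_iff]
      convert! continuousOn_iff_continuous_domRestrict.mp hf using 1
      ext x : 1
      exact hgu x x.2
    exact continuous_subtype_val.comp this
  have hui : InjOn u (Icc (-1) 1) := by
    intro x hx y hy hxy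
    apply hi hx hy
    rw [← hgu x hx, ← hgu y hy, hxy]
  have m0 : (0:ℝ) ∈ Icc (-1:ℝ) 1 := by norm_num
  have m1 : (1:ℝ) ∈ Icc (-1:ℝ) 1 := by norm_num
  have m2 : (-1:ℝ) ∈ Icc (-1:ℝ) 1 := by norm_num
  have hu0 : u 0 = t0 := g.injOn (hu 0 m0) ht0 (by rw [hgu 0 m0, h0])
  refine ⟨u 1, hu 1 m1, u (-1), hu _ m2, (hgu 1 m1).symm, (hgu _ m2).symm, ?_⟩
  rw [← hu0]
  rcases huc.strictMonoOn_of_injOn_Icc' (by norm_num) hui with h | h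
  · left; exact ⟨h m2 m0 (by norm_num), h m0 m1 (by norm_num)⟩
  · right; exact ⟨h m0 m1 (by norm_num), h m2 m0 (by norm_num)⟩

lemma outer_connected (R : ℝ) (hR : 0 ≤ R) : IsPreconnected {z : ℝ × ℝ | R < ‖z‖} := by
  have h1 : IsConnected (Metric.sphere (0 : ℝ × ℝ) 1) := by
    apply isConnected_sphere _ _ zero_le_one
    rw [← Module.finrank_eq_rank]
    simp
  have h2 := (isPreconnected_Ioi (a := R)).prod h1.isPreconnected
  have h3 := h2.image (fun z : ℝ × (ℝ × ℝ) => z.1 • z.2) (by fun_prop)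
  convert! h3 using 1
  ext z
  constructor
  · intro hz
    have hz' : R < ‖z‖ := hz
    have : ‖z‖ ≠ 0 := by linarith
    refine ⟨(‖z‖, ‖z‖⁻¹ • z), ⟨hz', ?_⟩, ?_⟩
    · simp [norm_smul, this]
    · simp only [smul_smul]; rw [mul_inv_cancel₀ this, one_smul]
  · rintro ⟨⟨r, w⟩, ⟨hr, hw⟩, rfl⟩
    have hr' : R < r := hr
    have hw' : ‖w‖ = 1 := by simpa using hw
    simp only [mem_ofPred_eq, norm_smul, hw', Real.norm_eq_abs, mul_one]
    exact hr'.trans_le (le_abs_self r)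

lemma ends_joined {V : Type} (γ : V → Arc) (K : Set (ℝ × ℝ)) (hK : IsCompact K)
    (hKU : K ⊆ arcUnion γ) (x y : ℝ × ℝ) (hx : x ∉ K) (hy : y ∉ K)
    (hx' : x ∈ closure (contour γ)) (hy' : y ∈ closure (contour γ)) : JoinedIn Kᶜ x y := by
  have hKo : IsOpen Kᶜ := hK.isClosed.isOpen_compl
  obtain ⟨R0, hR0⟩ := hK.isBounded.exists_norm_le
  set R := max R0 0
  have hR : ∀ z ∈ K, ‖z‖ ≤ R := fun z hz => (hR0 z hz).trans (le_max_left _ _)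
  have houter : {z : ℝ × ℝ | R < ‖z‖} ⊆ Kᶜ := fun z hz hzK => absurd (hR z hzK) (not_le.mpr hz)
  have key : ∀ x, x ∉ K → x ∈ closure (contour γ) →
      ∃ z, R < ‖z‖ ∧ z ∈ connectedComponentIn Kᶜ x := by
    intro x hx hx'
    have hopen : IsOpen (connectedComponentIn Kᶜ x) := hKo.connectedComponentIn
    obtain ⟨w, hw, hwc⟩ := mem_closure_iff.mp hx' _ hopen (mem_connectedComponentIn hx)
    have heq := connectedComponentIn_eq hw
    have hsub : connectedComponentIn (arcUnion γ)ᶜ w ⊆ connectedComponentIn Kᶜ w :=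
      connectedComponentIn_mono _ (compl_subset_compl.mpr hKU)
    by_contra! hcon
    apply hwc.2
    refine (Metric.isBounded_closedBall (x := (0 : ℝ × ℝ)) (r := R)).subset ?_
    intro z hz
    rw [mem_closedBall_zero_iff]
    by_contra! hlt
    exact hcon z hlt (heq ▸ hsub hz)
  obtain ⟨z, hz, hzc⟩ := key x hx hx'
  obtain ⟨w, hw, hwc⟩ := key y hy hy'
  have hzw : w ∈ connectedComponentIn Kᶜ z :=
    (outer_connected R (le_max_right _ _)).subset_connectedComponentIn hz houter hw
  have hxy : y ∈ connectedComponentIn Kᶜ x := by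
    rw [connectedComponentIn_eq hzc, connectedComponentIn_eq hzw, ← connectedComponentIn_eq hwc]
    exact mem_connectedComponentIn hy
  have hpc : IsPathConnected (connectedComponentIn Kᶜ x) :=
    (hKo.connectedComponentIn.isConnected_iff_isPathConnected).mp
      (isConnected_connectedComponentIn_iff.mpr hx)
  exact (hpc.joinedIn _ (mem_connectedComponentIn hx) _ hxy).mono
    (connectedComponentIn_subset _ _)

theorem topo {V : Type} (γ : V → Arc) (c v a b : V) (q : ℝ × ℝ)
    (hX : CrossesProperlyAt (γ c) (γ v) q) (hcv : (γ c).img ∩ (γ v).img = {q})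
    (hva : (γ v).img ∩ (γ a).img = ∅) (hvb : (γ v).img ∩ (γ b).img = ∅)
    (ta tc tb : ℝ) (hta : ta ∈ Icc (0:ℝ) 1) (htb : tb ∈ Icc (0:ℝ) 1)
    (htc : tc ∈ Icc (0:ℝ) 1)
    (hcq : (γ c).toFun tc = q) (hac : ta < tc) (hcb : tc < tb)
    (hA : (γ c).toFun ta ∈ (γ a).img) (hB : (γ c).toFun tb ∈ (γ b).img)
    (hab : ((γ a).img ∩ (γ b).img).Nonempty)
    (h0 : (γ v).toFun 0 ∈ closure (contour γ)) (h1 : (γ v).toFun 1 ∈ closure (contour γ)) :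
    False := by
  obtain ⟨-, ⟨t, ht, htq⟩, h, hqs, htar, hq0, hh, hv⟩ := hX
  have hcv' : ∀ x, x ∈ (γ c).img → x ∈ (γ v).img → x = q := fun x h1 h2 => by
    have : x ∈ (γ c).img ∩ (γ v).img := ⟨h1, h2⟩
    rwa [hcv] at this
  have hva' : ∀ x, x ∈ (γ v).img → x ∉ (γ a).img := fun x h1 h2 => by
    have : x ∈ (γ v).img ∩ (γ a).img := ⟨h1, h2⟩
    rwa [hva] at this
  have hvb' : ∀ x, x ∈ (γ v).img → x ∉ (γ b).img := fun x h1 h2 => by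
    have : x ∈ (γ v).img ∩ (γ b).img := ⟨h1, h2⟩
    rwa [hvb] at this
  have ht' : t ∈ Icc (0:ℝ) 1 := Ioo_subset_Icc_self ht
  have hqv : q ∈ (γ v).img := ⟨t, ht', htq⟩
  have hs0 : h.symm (0, 0) = q := by
    have := h.left_inv hqs
    rwa [hq0] at this
  have hball : ∀ x y : ℝ, (cl x / 2, cl y / 2) ∈ h.target := by
    intro x y
    rw [htar, mem_ball_zero_iff, Prod.norm_def]
    have hx := abs_le.mpr (cl_mem x)
    have hy := abs_le.mpr (cl_mem y)
    simp only [Real.norm_eq_abs, abs_div, Nat.abs_ofNat]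
    exact max_lt (by linarith) (by linarith)
  have c0 : cl 0 = 0 := cl_of_mem (by norm_num)
  have hhor : ∀ x, h.symm (cl x / 2, cl 0 / 2) ∈ (γ c).img := by
    intro x
    have := hball x 0
    have h2 : (cl x / 2, cl 0 / 2) ∈ h '' (h.source ∩ (γ c).img) := by
      rw [hh]; exact ⟨htar ▸ this, by simp [c0]⟩
    obtain ⟨z, ⟨hz, hz'⟩, hze⟩ := h2
    rw [← hze, h.left_inv hz]; exact hz'
  have hver : ∀ x, h.symm (cl 0 / 2, cl x / 2) ∈ (γ v).img := by
    intro x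
    have := hball 0 x
    have h2 : (cl 0 / 2, cl x / 2) ∈ h '' (h.source ∩ (γ v).img) := by
      rw [hv]; exact ⟨htar ▸ this, by simp [c0]⟩
    obtain ⟨z, ⟨hz, hz'⟩, hze⟩ := h2
    rw [← hze, h.left_inv hz]; exact hz'
  have ccl := cl_cont
  set Ψ : ℝ × ℝ → ℝ × ℝ := fun z => h.symm (cl z.1 / 2, cl z.2 / 2) with hΨ
  have hΨc : Continuous Ψ :=
    h.continuousOn_symm.comp_continuous (by fun_prop) (fun z => hball z.1 z.2)
  have hΨi : InjOn Ψ (Icc (-1) 1 ×ˢ Icc (-1) 1) := by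
    rintro ⟨x, y⟩ ⟨hx, hy⟩ ⟨x', y'⟩ ⟨hx', hy'⟩ he
    have h2 := congrArg h he
    simp only [hΨ] at h2
    rw [h.right_inv (hball _ _), h.right_inv (hball _ _)] at h2
    simp only at hx hy hx' hy'
    rw [cl_of_mem hx, cl_of_mem hy, cl_of_mem hx', cl_of_mem hy'] at h2
    simp only [Prod.mk.injEq] at h2 ⊢
    constructor <;> linarith [h2.1, h2.2]
  have m0 : (0:ℝ) ∈ Icc (-1:ℝ) 1 := by norm_num
  have hΨ0 : Ψ (0, 0) = q := by simp only [hΨ, c0, zero_div]; exact hs0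
  -- J part
  have hJoin : ∃ S : Set (ℝ × ℝ), S = ((γ c).img \ {q}) ∪ (γ a).img ∪ (γ b).img ∧
      JoinedIn S (Ψ (1, 0)) (Ψ (-1, 0)) := by
    refine ⟨_, rfl, ?_⟩
    set S := ((γ c).img \ {q}) ∪ (γ a).img ∪ (γ b).img with hS
    obtain ⟨s, hs, s', hs', e1, e2, hcase⟩ := arc_sides (γ c) (fun x => Ψ (x, 0))
      (hΨc.comp (by fun_prop)).continuousOn
      (fun x hx y hy he => by
        have := hΨi (Set.mk_mem_prod hx m0) (Set.mk_mem_prod hy m0) he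
        simpa using this)
      (fun x _ => hhor x) tc htc (by rw [hΨ0, hcq])
    rw [e1, e2]
    have gen : ∀ lo ∈ Icc (0:ℝ) 1, ∀ hi ∈ Icc (0:ℝ) 1, lo < tc → tc < hi →
        JoinedIn S ((γ c).toFun lo) ((γ c).toFun hi) := by
      intro lo hlo hi hhi h1 h2
      have inS : ∀ u ∈ Icc (0:ℝ) 1, u ≠ tc → (γ c).toFun u ∈ S := by
        intro u hu hne
        refine Or.inl (Or.inl ⟨mem_image_of_mem _ hu, ?_⟩)
        intro he
        exact hne ((γ c).injOn hu htc (by rw [hcq]; exact he))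
      obtain ⟨x, hxa, hxb⟩ := hab
      have j1 := arc_joined (γ c) S lo ta hlo hta (fun u hu huu => inS u hu (by
        have := (mem_uIcc.mp huu); apply ne_of_lt; rcases this with h | h <;> linarith [h.2]))
      have j2 := arc_img_joined (γ a) S (fun z hz => Or.inl (Or.inr hz)) hA hxa
      have j3 := arc_img_joined (γ b) S (fun z hz => Or.inr hz) hxb hB
      have j4 := arc_joined (γ c) S tb hi htb hhi (fun u hu huu => inS u hu (by
        have := (mem_uIcc.mp huu); apply ne_of_gt; rcases this with h | h <;> linarith [h.1]))
      exact ((j1.trans j2).trans j3).trans j4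
    rcases hcase with ⟨h1, h2⟩ | ⟨h1, h2⟩
    · exact (gen _ hs' _ hs h1 h2).symm
    · exact gen _ hs _ hs' h1 h2
  obtain ⟨S, hS, jS⟩ := hJoin
  set K := (γ c).img ∪ (γ a).img ∪ (γ b).img with hKdef
  have hKc : IsCompact K :=
    ((arc_compact _).union (arc_compact _)).union (arc_compact _)
  have hKU : K ⊆ arcUnion γ := by
    unfold arcUnion
    exact union_subset (union_subset (subset_iUnion (fun v => (γ v).img) c)
      (subset_iUnion (fun v => (γ v).img) a)) (subset_iUnion (fun v => (γ v).img) b)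
  have hvK : ∀ u ∈ Icc (0:ℝ) 1, u ≠ t → (γ v).toFun u ∈ Kᶜ := by
    intro u hu hne hK
    have hm : (γ v).toFun u ∈ (γ v).img := mem_image_of_mem _ hu
    rcases hK with (h | h) | h
    · exact hne ((γ v).injOn hu ht' (by rw [htq]; exact hcv' _ h hm))
    · exact hva' _ hm h
    · exact hvb' _ hm h
  have i0 : (0:ℝ) ∈ Icc (0:ℝ) 1 := by norm_num
  have i1 : (1:ℝ) ∈ Icc (0:ℝ) 1 := by norm_num
  have jends := ends_joined γ K hKc hKU _ _ (hvK 0 i0 ht.1.ne) (hvK 1 i1 ht.2.ne') h0 h1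
  have jT : JoinedIn Kᶜ (Ψ (0, 1)) (Ψ (0, -1)) := by
    obtain ⟨s, hs, s', hs', e1, e2, hcase⟩ := arc_sides (γ v) (fun x => Ψ (0, x))
      (hΨc.comp (by fun_prop)).continuousOn
      (fun x hx y hy he => by
        have := hΨi (Set.mk_mem_prod m0 hx) (Set.mk_mem_prod m0 hy) he
        simpa using this)
      (fun x _ => hver x) t ht' (by rw [hΨ0, htq])
    rw [e1, e2]
    have gen : ∀ lo ∈ Icc (0:ℝ) 1, ∀ hi ∈ Icc (0:ℝ) 1, lo < t → t < hi →
        JoinedIn Kᶜ ((γ v).toFun lo) ((γ v).toFun hi) := by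
      intro lo hlo hi hhi h1 h2
      have j1 := arc_joined (γ v) Kᶜ lo 0 hlo i0 (fun u hu huu => hvK u hu (by
        have := (mem_uIcc.mp huu); apply ne_of_lt; rcases this with h | h <;> linarith [h.2, hlo.1]))
      have j4 := arc_joined (γ v) Kᶜ 1 hi i1 hhi (fun u hu huu => hvK u hu (by
        have := (mem_uIcc.mp huu); apply ne_of_gt; rcases this with h | h <;> linarith [h.1, hhi.2]))
      exact (j1.trans jends).trans j4
    rcases hcase with ⟨h1, h2⟩ | ⟨h1, h2⟩
    · exact (gen _ hs' _ hs h1 h2).symm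
    · exact gen _ hs _ hs' h1 h2
  have hSm : ∀ s : ℝ, jS.somePath.extend s ∈ S := fun s => jS.somePath_mem _
  have hTm : ∀ s : ℝ, jT.somePath.extend s ∈ Kᶜ := fun s => jT.somePath_mem _
  have hφ : Function.Injective (Complex.equivRealProdCLM.symm : ℝ × ℝ → ℂ) :=
    Complex.equivRealProdCLM.symm.injective
  have hφc : Continuous (Complex.equivRealProdCLM.symm : ℝ × ℝ → ℂ) :=
    Complex.equivRealProdCLM.symm.continuous
  refine core_s9 (fun z => Complex.equivRealProdCLM.symm (Ψ z)) (hφc.comp hΨc)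
    (fun x hx y hy he => hΨi hx hy (hφ he))
    (fun s => Complex.equivRealProdCLM.symm (jS.somePath.extend s))
    (fun s => Complex.equivRealProdCLM.symm (jT.somePath.extend s))
    (hφc.comp jS.somePath.continuous_extend) (hφc.comp jT.somePath.continuous_extend)
    (by simp) (by simp) (by simp) (by simp) ?_ ?_ ?_
  · intro s y _ he
    have he := hφ he
    have hm := hSm s
    rw [he, hS] at hm
    have hy := hver y
    rcases hm with (hm | hm) | hm
    · exact hm.2 (hcv' _ hm.1 hy)
    · exact hva' _ hy hm
    · exact hvb' _ hy hm
  · intro s x _ he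
    have he := hφ he
    have hm := hTm s
    rw [he] at hm
    exact hm (Or.inl (Or.inl (hhor x)))
  · intro s u he
    have he := hφ he
    apply hTm u
    rw [← he]
    have hm := hS.subset (hSm s)
    rcases hm with (hm | hm) | hm
    · exact Or.inl (Or.inl hm.1)
    · exact Or.inl (Or.inr hm)
    · exact Or.inr hm

end Aux

lemma comb (n : ℕ) (hn : 7 ≤ n) (t : ZMod n → ℝ) (ht : Function.Injective t) :
    ∃ a m b : ZMod n, t a < t m ∧ t m < t b ∧ (b = a + 1 ∨ a = b + 1) ∧
      m ≠ a ∧ m ≠ b ∧ m ≠ a + 1 ∧ a ≠ m + 1 ∧ m ≠ b + 1 ∧ b ≠ m + 1 := by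
  have : NeZero n := ⟨by omega⟩
  have hk : ∀ k : ℕ, 0 < k → k < 7 → (k : ZMod n) ≠ 0 := by
    intro k h0 h7 h
    rw [ZMod.natCast_eq_zero_iff] at h
    have := Nat.le_of_dvd h0 h
    omega
  have k1 : (1 : ZMod n) ≠ 0 := by simpa using hk 1 (by norm_num) (by norm_num)
  have k2 : (2 : ZMod n) ≠ 0 := by simpa using hk 2 (by norm_num) (by norm_num)
  have k3 : (3 : ZMod n) ≠ 0 := by simpa using hk 3 (by norm_num) (by norm_num)
  have k4 : (4 : ZMod n) ≠ 0 := by simpa using hk 4 (by norm_num) (by norm_num)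
  have ne : ∀ x y : ZMod n, (x - y = 1 ∨ x - y = 2 ∨ x - y = 3 ∨ x - y = 4 ∨
      y - x = 1 ∨ y - x = 2 ∨ y - x = 3 ∨ y - x = 4) → x ≠ y := by
    rintro x y h rfl
    simp only [sub_self] at h
    rcases h with h | h | h | h | h | h | h | h
    exacts [k1 h.symm, k2 h.symm, k3 h.symm, k4 h.symm, k1 h.symm, k2 h.symm, k3 h.symm, k4 h.symm]
  obtain ⟨i, hi⟩ := Finite.exists_min t
  have lt : ∀ j, j ≠ i → t i < t j := fun j hj => lt_of_le_of_ne (hi j) (fun h => hj (ht h.symm))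
  rcases lt_trichotomy (t (i + 1)) (t (i - 1)) with h | h | h
  · rcases lt_trichotomy (t (i + 2)) (t (i - 1)) with h' | h' | h'
    · exact ⟨i, i + 2, i - 1, lt _ (ne _ _ (by ring_nf; simp)), h', by first | (left; ring1) | (right; ring1), ne _ _ (by ring_nf; simp), ne _ _ (by ring_nf; simp),
        ne _ _ (by ring_nf; simp), ne _ _ (by ring_nf; simp), ne _ _ (by ring_nf; simp),
        ne _ _ (by ring_nf; simp)⟩
    · exact absurd (ht h') (ne _ _ (by ring_nf; simp))
    · exact ⟨i + 1, i - 1, i + 2, h, h', by first | (left; ring1) | (right; ring1), ne _ _ (by ring_nf; simp), ne _ _ (by ring_nf; simp),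
        ne _ _ (by ring_nf; simp), ne _ _ (by ring_nf; simp), ne _ _ (by ring_nf; simp),
        ne _ _ (by ring_nf; simp)⟩
  · exact absurd (ht h) (ne _ _ (by ring_nf; simp))
  · rcases lt_trichotomy (t (i - 2)) (t (i + 1)) with h' | h' | h'
    · exact ⟨i, i - 2, i + 1, lt _ (ne _ _ (by ring_nf; simp)), h', by first | (left; ring1) | (right; ring1), ne _ _ (by ring_nf; simp), ne _ _ (by ring_nf; simp),
        ne _ _ (by ring_nf; simp), ne _ _ (by ring_nf; simp), ne _ _ (by ring_nf; simp),
        ne _ _ (by ring_nf; simp)⟩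
    · exact absurd (ht h') (ne _ _ (by ring_nf; simp))
    · exact ⟨i - 1, i + 1, i - 2, h, h', by first | (left; ring1) | (right; ring1), ne _ _ (by ring_nf; simp), ne _ _ (by ring_nf; simp),
        ne _ _ (by ring_nf; simp), ne _ _ (by ring_nf; simp), ne _ _ (by ring_nf; simp),
        ne _ _ (by ring_nf; simp)⟩

/-- For `n ≥ 7`, the wheel graph `W n` has no order-preserving 1-string representation in
which every arc has both of its endpoints in the closure of the contour. -/
theorem stmt_9 (n : ℕ) (hn : 7 ≤ n) (p : Option (ZMod n) → ℝ × ℝ)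
    (hp : IsPlaneDrawing (wheelGraph n) p) :
    ¬ ∃ R : OneStringRep (wheelGraph n),
        OrderPreserving (wheelGraph n) p R ∧
        ∀ v : Option (ZMod n),
          (R.γ v).toFun 0 ∈ closure (contour R.γ) ∧
          (R.γ v).toFun 1 ∈ closure (contour R.γ) := by
  rintro ⟨R, -, hends⟩
  have hhub : ∀ i : ZMod n, (wheelGraph n).Adj none (some i) := by
    intro i; simp [wheelGraph]
  have hq : ∀ i : ZMod n, ∃ s ∈ Set.Icc (0:ℝ) 1,
      (R.γ none).img ∩ (R.γ (some i)).img = {(R.γ none).toFun s} := by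
    intro i
    obtain ⟨q, hq⟩ := R.adj_inter _ _ (hhub i)
    have : q ∈ (R.γ none).img ∩ (R.γ (some i)).img := by rw [hq]; rfl
    obtain ⟨s, hs, hsq⟩ := this.1
    exact ⟨s, hs, by rw [hq, hsq]⟩
  choose t ht hint using hq
  have hmem : ∀ i, (R.γ none).toFun (t i) ∈ (R.γ (some i)).img := fun i =>
    (show (R.γ none).toFun (t i) ∈ (R.γ none).img ∩ (R.γ (some i)).img by rw [hint]; rfl).2
  have hinj : Function.Injective t := by
    intro i j hij
    by_contra hne
    have := R.no_triple none (some i) (some j) (by simp) (by simp) (by simpa using hne)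
    have h2 : (R.γ none).toFun (t i) ∈ (R.γ none).img ∩ (R.γ (some i)).img ∩ (R.γ (some j)).img :=
      ⟨⟨Set.mem_image_of_mem _ (ht i), hmem i⟩, by rw [hij]; exact hmem j⟩
    rw [this] at h2
    exact h2
  obtain ⟨a, m, b, h1, h2, hab, n1, n2, n3, n4, n5, n6⟩ := comb n hn t hinj
  have hane : a ≠ b := fun h => by subst h; linarith
  have hadj : (wheelGraph n).Adj (some a) (some b) := by
    simp only [wheelGraph, SimpleGraph.fromRel_adj]
    exact ⟨by simpa using hane, hab⟩
  obtain ⟨x, hx⟩ := R.adj_inter _ _ hadj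
  refine topo R.γ none (some m) (some a) (some b) _
    (R.proper none (some m) (by simp) _ (by rw [hint]; rfl)) (hint m)
    (R.nonadj_disjoint _ _ (by simpa using n1) ?_) (R.nonadj_disjoint _ _ (by simpa using n2) ?_)
    (t a) (t m) (t b) (ht a) (ht b) (ht m) rfl h1 h2 (hmem a) (hmem b) ⟨x, by rw [hx]; rfl⟩
    (hends _).1 (hends _).2
  · simp only [wheelGraph, SimpleGraph.fromRel_adj]
    rintro ⟨-, h | h⟩
    · exact n4 h
    · exact n3 h
  · simp only [wheelGraph, SimpleGraph.fromRel_adj]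
    rintro ⟨-, h | h⟩
    · exact n6 h
    · exact n5 h
end
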